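/- arXiv:1604.02407 — 2 statements merged into one kernel-verified Lean document; each statement's English description precedes it below -/
import Mathlib

section
/- Let W : ℝ → [0,∞) satisfy hypotheses (w1)–(w4) with W of class C², let q* be the constant of the one-dimensional interpolation inequality and let 0 ≤ q < q*/4. Then there exist constants δ₀, C > 0 such that the following holds. Let I = (a,b) be an open interval with ℒ¹(I) > 1, and let α = (α₀, α₁), β = (β₀, β₁) ∈ ℝ² with ‖α‖, ‖β‖ ≤ δ < δ₀. Then there exists a C⁴ function v₋ : [a,b] → ℝ with v₋(a) = −1 + α₀, v₋'(a) = α₁, v₋(b) = −1 + β₀, v₋'(b) = β₁, which minimizes E(·; I) among all C² functions satisfying these four boundary conditions, solves the Euler–Lagrange equation 2 v₋⁗ + 2q v₋'' + W'(v₋) = 0 on (a,b), and satisfies: ‖v₋ + 1‖_{L∞(I)} ≤ C δ; ‖v₋^{(k)}‖_{L²(I)} ≤ C δ for k = 1,…,4; and ‖v₋^{(k)}‖_{L∞(I)} ≤ C δ for k = 1,…,3. -/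
open MeasureTheory Real

/-- Hypotheses (w1)–(w4) on the double-well potential. -/
def DoubleWell (W : ℝ → ℝ) : Prop :=
  ContDiff ℝ 5 W ∧ (∀ s, W s = W (-s)) ∧ (∀ s, 0 ≤ W s) ∧
  (∀ s, 0 ≤ s → s ≠ 1 → 0 < W s) ∧ W 1 = 0 ∧ deriv W 1 = 0 ∧
  ∃ cW : ℝ, 0 < cW ∧ cW ≤ 1 ∧ ∀ s, 0 ≤ s → cW * |s - 1|^2 ≤ W s

/-- Rescaled energy `E(v; (a,b))`. -/
noncomputable def Eres (W : ℝ → ℝ) (q : ℝ) (v : ℝ → ℝ) (a b : ℝ) : ℝ :=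
  ∫ x in a..b, (W (v x) - q * (deriv v x)^2 + (deriv (deriv v) x)^2)

/-!
Since `W ≥ 0` vanishes at `p` with `k = W''(p) > 0`, applying the interpolation inequality to
`p + ε u` and letting `ε → 0` gives it for the quadratic potential `k s² / 2`, with the same
constant. On intervals of length at least one, subdivided into pieces of length between one and two,
`q < q* / 4` then makes both `E` and its quadratic part coercive, with constants independent of the
length. Near `p` the nonlinearity `W'(p + s) - k s` is Lipschitz with a small constant, so a
contraction argument in `L²` solves the Euler–Lagrange equation with clamped data of size `δ`, with
all bounds linear in `δ`. A competitor of smaller energy stays close to `p`, because by coercivity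
it pays for leaving the well; there the Taylor remainder of `W` is absorbed by the coercive
quadratic part, so the critical point has the smaller energy after all.
-/

section

open Set Filter
open scoped Topology NNReal Interval

theorem hasDerivAt_iteratedDeriv {n i : ℕ} {u : ℝ → ℝ} (hu : ContDiff ℝ n u) (hi : i < n)
    (x : ℝ) : HasDerivAt (iteratedDeriv i u) (iteratedDeriv (i + 1) u x) x := by
  rw [iteratedDeriv_succ]
  exact (hu.differentiable_iteratedDeriv i (by exact_mod_cast hi) x).hasDerivAt

theorem iteratedDeriv_two_eq (u : ℝ → ℝ) : iteratedDeriv 2 u = deriv (deriv u) := by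
  rw [iteratedDeriv_succ, iteratedDeriv_one]

theorem integral_le_integral_of_continuous {f g : ℝ → ℝ} (hf : Continuous f) (hg : Continuous g)
    {a b : ℝ} (hab : a ≤ b) (h : ∀ x ∈ Icc a b, f x ≤ g x) :
    ∫ x in a..b, f x ≤ ∫ x in a..b, g x :=
  intervalIntegral.integral_mono_on hab (hf.intervalIntegrable _ _) (hg.intervalIntegrable _ _) h

theorem integral_add_add {f g h : ℝ → ℝ} (hf : Continuous f) (hg : Continuous g)
    (hh : Continuous h) (a b : ℝ) :
    ∫ x in a..b, (f x + g x + h x) =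
      (∫ x in a..b, f x) + (∫ x in a..b, g x) + ∫ x in a..b, h x := by
  rw [intervalIntegral.integral_add (Continuous.intervalIntegrable (by fun_prop) _ _)
    (hh.intervalIntegrable _ _), intervalIntegral.integral_add (hf.intervalIntegrable _ _)
    (hg.intervalIntegrable _ _)]

theorem integral_sq_nonneg (f : ℝ → ℝ) {a b : ℝ} (hab : a ≤ b) : 0 ≤ ∫ x in a..b, f x ^ 2 :=
  intervalIntegral.integral_nonneg hab fun x _ => sq_nonneg (f x)

theorem sq_le_sq_add_integral {f f' : ℝ → ℝ} (hf : ∀ x, HasDerivAt f (f' x) x)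
    (hf' : Continuous f') {a b x y : ℝ} (hx : x ∈ Icc a b) (hy : y ∈ Icc a b) :
    f x ^ 2 ≤ f y ^ 2 + ((∫ t in a..b, f t ^ 2) + ∫ t in a..b, f' t ^ 2) := by
  have hc : Continuous f := continuous_iff_continuousAt.2 fun x => (hf x).continuousAt
  have hsub : Ι y x ⊆ Ι a b := by
    rw [uIoc_of_le (hx.1.trans hx.2)]
    exact Ioc_subset_Ioc (le_min hy.1 hx.1) (max_le hy.2 hx.2)
  have hftc : ∫ t in y..x, 2 * f t * f' t = f x ^ 2 - f y ^ 2 :=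
    intervalIntegral.integral_eq_sub_of_hasDerivAt (f := fun t => f t ^ 2)
      (fun t _ => by simpa using (hf t).fun_pow 2) (Continuous.intervalIntegrable (by fun_prop) _ _)
  have hyoung : ∀ t, ‖2 * f t * f' t‖ ≤ f t ^ 2 + f' t ^ 2 := fun t => by
    rw [norm_eq_abs, abs_le]
    constructor <;> nlinarith [sq_nonneg (f t + f' t), sq_nonneg (f t - f' t)]
  have hle : f x ^ 2 - f y ^ 2 ≤ ∫ t in a..b, (f t ^ 2 + f' t ^ 2) := by
    calc f x ^ 2 - f y ^ 2 ≤ ‖∫ t in y..x, 2 * f t * f' t‖ := hftc ▸ le_norm_self _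
      _ ≤ |∫ t in y..x, (f t ^ 2 + f' t ^ 2)| :=
        intervalIntegral.norm_integral_le_abs_of_norm_le (Eventually.of_forall hyoung)
          (Continuous.intervalIntegrable (by fun_prop) _ _)
      _ ≤ |∫ t in a..b, (f t ^ 2 + f' t ^ 2)| :=
        intervalIntegral.abs_integral_mono_interval hsub
          (Eventually.of_forall fun t => by positivity)
          (Continuous.intervalIntegrable (by fun_prop) _ _)
      _ = ∫ t in a..b, (f t ^ 2 + f' t ^ 2) :=
        abs_of_nonneg (intervalIntegral.integral_nonneg (hx.1.trans hx.2) fun t _ => by positivity)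
  rw [intervalIntegral.integral_add (Continuous.intervalIntegrable (by fun_prop) _ _)
    (Continuous.intervalIntegrable (by fun_prop) _ _)] at hle
  linarith

theorem sq_le_integral_of_one_le {f f' : ℝ → ℝ} (hf : ∀ x, HasDerivAt f (f' x) x)
    (hf' : Continuous f') {a b x : ℝ} (hab : 1 ≤ b - a) (hx : x ∈ Icc a b) :
    f x ^ 2 ≤ 2 * (∫ t in a..b, f t ^ 2) + ∫ t in a..b, f' t ^ 2 := by
  have hc : Continuous f := continuous_iff_continuousAt.2 fun x => (hf x).continuousAt
  have hab' : a ≤ b := by linarith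
  obtain ⟨y, hy, hmin⟩ := isCompact_Icc.exists_isMinOn (nonempty_Icc.2 hab')
    (hc.pow 2).continuousOn
  have hmean : (b - a) * f y ^ 2 ≤ ∫ t in a..b, f t ^ 2 := by
    rw [← smul_eq_mul, ← intervalIntegral.integral_const]
    exact integral_le_integral_of_continuous continuous_const (hc.pow 2) hab' fun t ht => hmin ht
  have hosc := sq_le_sq_add_integral hf hf' hx hy
  nlinarith [sq_nonneg (f y)]

/-- The interpolation inequality with constant `c` and potential `G` on all intervals of length at
least one; the factor `4` is what subdividing into pieces of length between one and two costs. -/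
def HasInterp (c : ℝ) (G : ℝ → ℝ) : Prop :=
  ∀ a b : ℝ, 1 ≤ b - a → ∀ u : ℝ → ℝ, ContDiff ℝ 2 u →
    c * ∫ x in a..b, iteratedDeriv 1 u x ^ 2 ≤
      (∫ x in a..b, G (u x)) + 4 * ∫ x in a..b, iteratedDeriv 2 u x ^ 2

theorem exists_nat_one_le_div_le_two {L : ℝ} (hL : 1 ≤ L) :
    ∃ n : ℕ, 0 < n ∧ 1 ≤ L / n ∧ L / n ≤ 2 := by
  have hpos : 0 < ⌊L⌋₊ := Nat.floor_pos.2 hL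
  have hpos' : (0 : ℝ) < ⌊L⌋₊ := by exact_mod_cast hpos
  have hone : (1 : ℝ) ≤ ⌊L⌋₊ := by exact_mod_cast hpos
  refine ⟨⌊L⌋₊, hpos, ?_, ?_⟩
  · rw [le_div_iff₀ hpos', one_mul]
    exact Nat.floor_le (by linarith)
  · rw [div_le_iff₀ hpos']
    linarith [Nat.lt_floor_add_one L]

theorem integral_le_of_forall_short {f g h : ℝ → ℝ} (hf : Continuous f) (hg : Continuous g)
    (hh : Continuous h) {c : ℝ}
    (hloc : ∀ a b, 1 ≤ b - a → b - a ≤ 2 →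
      c * ∫ x in a..b, f x ≤ (∫ x in a..b, g x) + 4 * ∫ x in a..b, h x)
    {a b : ℝ} (hab : 1 ≤ b - a) :
    c * ∫ x in a..b, f x ≤ (∫ x in a..b, g x) + 4 * ∫ x in a..b, h x := by
  obtain ⟨n, hn, hle, hge⟩ := exists_nat_one_le_div_le_two hab
  let t : ℕ → ℝ := fun j => a + j * ((b - a) / n)
  have hstep : ∀ j, t (j + 1) - t j = (b - a) / n := fun j => by simp only [t]; push_cast; ring
  have hsum : ∀ F : ℝ → ℝ, Continuous F →
      ∫ x in a..b, F x = ∑ j ∈ Finset.range n, ∫ x in t j..t (j + 1), F x := by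
    intro F hF
    have hn' : (n : ℝ) ≠ 0 := by exact_mod_cast hn.ne'
    rw [intervalIntegral.sum_integral_adjacent_intervals (fun j _ => hF.intervalIntegrable _ _)]
    congr 1 <;> simp only [t] <;> field_simp <;> ring
  rw [hsum f hf, hsum g hg, hsum h hh, Finset.mul_sum, Finset.mul_sum, ← Finset.sum_add_distrib]
  exact Finset.sum_le_sum fun j _ => hloc _ _ (by rwa [hstep]) (by rwa [hstep])

theorem hasInterp_of_interpolation {W : ℝ → ℝ} (hW : Continuous W) (hW0 : ∀ s, 0 ≤ W s) {c : ℝ}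
    (hinterp : ∀ a b : ℝ, a < b → ∀ u : ℝ → ℝ, ContDiff ℝ 2 u →
      c * ∫ x in a..b, (deriv u x)^2 ≤
        (1 / (b - a)^2) * (∫ x in a..b, W (u x)) +
          (b - a)^2 * ∫ x in a..b, (deriv (deriv u) x)^2) : HasInterp c W := by
  intro a b hab u hu
  have hu0 := hu.continuous
  have hu1 := hu.continuous_iteratedDeriv 1 (by norm_num)
  refine integral_le_of_forall_short (by fun_prop) (by fun_prop) (by fun_prop)
    (fun a b h1 h2 => ?_) hab
  have hloc := hinterp a b (by linarith) u hu
  rw [← iteratedDeriv_two_eq, ← iteratedDeriv_one] at hloc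
  have hWint : 0 ≤ ∫ x in a..b, W (u x) :=
    intervalIntegral.integral_nonneg (by linarith) fun x _ => hW0 _
  have hsq := integral_sq_nonneg (iteratedDeriv 2 u) (a := a) (b := b) (by linarith)
  refine hloc.trans (add_le_add (mul_le_of_le_one_left hWint ?_)
    (mul_le_mul_of_nonneg_right ?_ hsq))
  · rw [div_le_one (by positivity)]
    nlinarith
  · nlinarith

theorem eres_eq_integral (G : ℝ → ℝ) (q : ℝ) (u : ℝ → ℝ) (a b : ℝ) :
    Eres G q u a b =
      ∫ x in a..b, (G (u x) - q * iteratedDeriv 1 u x ^ 2 + iteratedDeriv 2 u x ^ 2) := by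
  rw [Eres, iteratedDeriv_one, iteratedDeriv_two_eq]

theorem eres_eq {G u : ℝ → ℝ} (hG : Continuous G) (hu : ContDiff ℝ 2 u) (q a b : ℝ) :
    Eres G q u a b = (∫ x in a..b, G (u x)) - q * (∫ x in a..b, iteratedDeriv 1 u x ^ 2) +
      ∫ x in a..b, iteratedDeriv 2 u x ^ 2 := by
  have hu0 := hu.continuous
  have hu1 := hu.continuous_iteratedDeriv 1 (by norm_num)
  simp only [eres_eq_integral, sub_eq_add_neg, ← neg_mul]
  rw [integral_add_add (by fun_prop) (by fun_prop) (by fun_prop),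
    intervalIntegral.integral_const_mul]

/-- The square of the `H²(a, b)` norm. -/
noncomputable def hTwoNormSq (u : ℝ → ℝ) (a b : ℝ) : ℝ :=
  (∫ x in a..b, u x ^ 2) + (∫ x in a..b, iteratedDeriv 1 u x ^ 2) +
    ∫ x in a..b, iteratedDeriv 2 u x ^ 2

theorem integral_sq_le_hTwoNormSq (u : ℝ → ℝ) {a b : ℝ} (hab : a ≤ b) :
    ∫ x in a..b, u x ^ 2 ≤ hTwoNormSq u a b := by
  rw [hTwoNormSq]
  linarith [integral_sq_nonneg (iteratedDeriv 1 u) hab, integral_sq_nonneg (iteratedDeriv 2 u) hab]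

namespace HasInterp

theorem exists_coercive {c : ℝ} {G : ℝ → ℝ} (h : HasInterp c G) (hc : 0 < c)
    (hG : Continuous G) (hG0 : ∀ s, 0 ≤ G s) {q : ℝ} (hq : 4 * q < c) :
    ∃ μ > 0, ∀ a b : ℝ, 1 ≤ b - a → ∀ u : ℝ → ℝ, ContDiff ℝ 2 u →
      μ * ((∫ x in a..b, G (u x)) + (∫ x in a..b, iteratedDeriv 1 u x ^ 2) +
        ∫ x in a..b, iteratedDeriv 2 u x ^ 2) ≤ Eres G q u a b := by
  have hmax : 4 * max q 0 < c := by rw [mul_max_of_nonneg _ _ (by norm_num)]; simp [hq, hc]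
  refine ⟨(c - 4 * max q 0) / (c + 4), div_pos (by linarith) (by linarith),
    fun a b hab u hu => ?_⟩
  rw [eres_eq hG hu, div_mul_eq_mul_div, div_le_iff₀ (by linarith)]
  have hinterp := h a b hab u hu
  have hA : 0 ≤ ∫ x in a..b, G (u x) :=
    intervalIntegral.integral_nonneg (by linarith) fun x _ => hG0 _
  have hB := integral_sq_nonneg (iteratedDeriv 1 u) (a := a) (b := b) (by linarith)
  have hqB := mul_le_mul_of_nonneg_right (le_max_left q 0) hB
  set A := ∫ x in a..b, G (u x)
  set B := ∫ x in a..b, iteratedDeriv 1 u x ^ 2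
  set D := ∫ x in a..b, iteratedDeriv 2 u x ^ 2
  have hBAD : c * B ≤ 4 * (A + D) := by linarith
  have hmax0 : 0 ≤ 1 + max q 0 := by positivity
  nlinarith [mul_le_mul_of_nonneg_left hBAD hmax0]

theorem exists_hTwoNormSq_le {c κ : ℝ} (h : HasInterp c fun s => κ * s ^ 2) (hc : 0 < c)
    (hκ : 0 < κ) {q : ℝ} (hq : 4 * q < c) :
    ∃ μ > 0, ∀ a b : ℝ, 1 ≤ b - a → ∀ u : ℝ → ℝ, ContDiff ℝ 2 u →
      μ * hTwoNormSq u a b ≤ Eres (fun s => κ * s ^ 2) q u a b := by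
  obtain ⟨μ, hμ, hcoer⟩ := h.exists_coercive hc (by fun_prop) (fun s => by positivity) hq
  refine ⟨μ * min κ 1, by positivity, fun a b hab u hu => (hcoer a b hab u hu).trans' ?_⟩
  have hab' : a ≤ b := by linarith
  rw [intervalIntegral.integral_const_mul, hTwoNormSq, mul_assoc, mul_add (min κ 1),
    mul_add (min κ 1)]
  have h0 := integral_sq_nonneg u hab'
  have h1 := integral_sq_nonneg (iteratedDeriv 1 u) hab'
  have h2 := integral_sq_nonneg (iteratedDeriv 2 u) hab'
  refine mul_le_mul_of_nonneg_left (add_le_add (add_le_add ?_ ?_) ?_) hμ.le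
  · exact mul_le_mul_of_nonneg_right (min_le_left _ _) h0
  · exact mul_le_of_le_one_left h1 (min_le_right _ _)
  · exact mul_le_of_le_one_left h2 (min_le_right _ _)

end HasInterp

/-! ### Quadratic expansion at the well -/

theorem abs_taylor_le_of_lipschitzOnWith {W : ℝ → ℝ} (hW : Differentiable ℝ W) {k : ℝ} {ε : ℝ≥0}
    {S : Set ℝ} (hS : Convex ℝ S) (hlip : LipschitzOnWith ε (fun s => deriv W s - k * s) S)
    {s t : ℝ} (hs : s ∈ S) (ht : t ∈ S) :
    |W t - W s - deriv W s * (t - s) - k / 2 * (t - s) ^ 2| ≤ ε * (t - s) ^ 2 := by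
  let g : ℝ → ℝ := fun x => W x - deriv W s * x - k / 2 * (x - s) ^ 2
  have hg : ∀ x, HasDerivAt g ((deriv W x - k * x) - (deriv W s - k * s)) x := fun x => by
    convert! (((hW x).hasDerivAt.sub ((hasDerivAt_id x).const_mul (deriv W s))).sub
      ((((hasDerivAt_id x).sub_const s).pow 2).const_mul (k / 2))) using 1
    simp only [id_eq]
    ring
  have hbound : ∀ x ∈ uIcc s t, ‖(deriv W x - k * x) - (deriv W s - k * s)‖ ≤ ε * |t - s| := by
    intro x hx
    have hxS : x ∈ S := hS.segment_subset hs ht (segment_eq_uIcc s t ▸ hx)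
    rw [← dist_eq_norm]
    refine (hlip.dist_le_mul x hxS s hs).trans ?_
    rw [dist_eq]
    exact mul_le_mul_of_nonneg_left (abs_sub_left_of_mem_uIcc hx) ε.2
  have hmean := (convex_uIcc s t).norm_image_sub_le_of_norm_hasDerivWithin_le
    (fun x _ => (hg x).hasDerivWithinAt) hbound left_mem_uIcc right_mem_uIcc
  rw [norm_eq_abs, norm_eq_abs, mul_assoc, ← pow_two, sq_abs] at hmean
  convert hmean using 2
  simp only [g]
  ring

theorem quadratic_bounds_of_lipschitzOnWith {W : ℝ → ℝ} (hW : Differentiable ℝ W) {p k η : ℝ}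
    {ε : ℝ≥0} (hp : W p = 0) (hp' : deriv W p = 0)
    (hlip : LipschitzOnWith ε (fun s => deriv W s - k * s) (Metric.closedBall p η)) {s : ℝ}
    (hs : |s| ≤ η) : (k / 2 - ε) * s ^ 2 ≤ W (p + s) ∧ W (p + s) ≤ (k / 2 + ε) * s ^ 2 := by
  have htaylor := abs_taylor_le_of_lipschitzOnWith hW (convex_closedBall p η) hlip
    (Metric.mem_closedBall_self ((abs_nonneg s).trans hs)) (t := p + s)
    (by simpa [dist_eq] using hs)
  rw [hp, hp', add_sub_cancel_left, abs_le] at htaylor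
  constructor <;> linarith

theorem exists_lipschitzOnWith_deriv_sub {W : ℝ → ℝ} (hW : ContDiff ℝ 2 W) (p : ℝ) {ε : ℝ≥0}
    (hε : 0 < ε) : ∃ η > 0, LipschitzOnWith ε (fun s => deriv W s - deriv (deriv W) p * s)
      (Metric.closedBall p η) := by
  have hstrict : HasStrictDerivAt (deriv W) (deriv (deriv W) p) p :=
    (hW.iterate_deriv' 1 1).contDiffAt.hasStrictDerivAt (by norm_num)
  obtain ⟨U, hU, happ⟩ := hstrict.hasStrictFDerivAt.approximates_deriv_on_nhds (Or.inr hε)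
  obtain ⟨η, hη, hηU⟩ := Metric.nhds_basis_closedBall.mem_iff.1 hU
  refine ⟨η, hη, ?_⟩
  have hlip : LipschitzOnWith ε (fun s => deriv W s - s * deriv (deriv W) p) U :=
    lipschitzOnWith_iff_restrict.2 happ.lipschitz_sub
  simpa only [mul_comm] using hlip.mono hηU

namespace HasInterp

theorem of_eventually_le {c κ : ℝ} {W : ℝ → ℝ} (h : HasInterp c W) (hW : Continuous W) {p : ℝ}
    (hnear : ∀ᶠ s in 𝓝 0, W (p + s) ≤ κ * s ^ 2) : HasInterp c fun s => κ * s ^ 2 := by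
  intro a b hab u hu
  have hu0 := hu.continuous
  obtain ⟨η, hη, hle⟩ := Metric.eventually_nhds_iff.1 hnear
  obtain ⟨M, hM⟩ := isCompact_Icc.exists_bound_of_continuousOn hu0.continuousOn (s := Icc a b)
  obtain ⟨ε, hε, hεM⟩ := exists_pos_mul_lt hη M
  have hint := h a b hab (fun x => p + ε * u x) (by fun_prop)
  have hscale : ∀ i, 0 < i → iteratedDeriv i (fun x => p + ε * u x) =
      fun x => ε * iteratedDeriv i u x := fun i hi => funext fun x => by
    rw [iteratedDeriv_const_add hi, iteratedDeriv_const_mul_field]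
  have hmono : ∫ x in a..b, W (p + ε * u x) ≤ ∫ x in a..b, κ * (ε * u x) ^ 2 :=
    integral_le_integral_of_continuous (by fun_prop) (by fun_prop) (by linarith) fun x hx =>
      hle <| by
        rw [dist_zero_right, norm_mul, norm_of_nonneg hε.le, mul_comm]
        exact (mul_le_mul_of_nonneg_right (hM x hx) hε.le).trans_lt hεM
  simp only [hscale 1 one_pos, hscale 2 two_pos, mul_pow, mul_left_comm _ (ε ^ 2),
    intervalIntegral.integral_const_mul (ε ^ 2)] at hint hmono
  have hε2 : 0 < ε ^ 2 := by positivity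
  refine le_of_mul_le_mul_left ?_ hε2
  linarith

theorem of_forall_gt {c κ : ℝ} (h : ∀ κ' > κ, HasInterp c fun s => κ' * s ^ 2) :
    HasInterp c fun s => κ * s ^ 2 := by
  intro a b hab u hu
  simp only [HasInterp, intervalIntegral.integral_const_mul] at h ⊢
  have hcont : Continuous fun κ' : ℝ =>
      κ' * (∫ x in a..b, u x ^ 2) + 4 * ∫ x in a..b, iteratedDeriv 2 u x ^ 2 := by fun_prop
  exact ge_of_tendsto (hcont.continuousWithinAt (s := Ioi κ)) <|
    eventually_mem_nhdsWithin.mono fun κ' hκ' => h κ' hκ' a b hab u hu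

theorem half_deriv_deriv {c : ℝ} {W : ℝ → ℝ} (h : HasInterp c W) (hW : ContDiff ℝ 2 W) {p : ℝ}
    (hp : W p = 0) (hp' : deriv W p = 0) :
    HasInterp c fun s => deriv (deriv W) p / 2 * s ^ 2 := by
  refine of_forall_gt fun κ hκ => h.of_eventually_le hW.continuous (p := p) ?_
  obtain ⟨η, hη, hlip⟩ := exists_lipschitzOnWith_deriv_sub hW p
    (Real.toNNReal_pos.2 (sub_pos.2 hκ))
  filter_upwards [Metric.closedBall_mem_nhds 0 hη] with s hs
  have hwell := (quadratic_bounds_of_lipschitzOnWith (hW.differentiable (by norm_num)) hp hp' hlip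
    (by simpa using hs)).2
  rwa [Real.coe_toNNReal _ (sub_pos.2 hκ).le, add_sub_cancel] at hwell

end HasInterp

/-! ### The linearized operator -/

/-- The linearized Euler–Lagrange operator `2 ∂⁴ + 2 q ∂² + k`. With `k = 0` it is the linear part
of the nonlinear equation, which reads `linEL q 0 v = -W' ∘ v`. -/
noncomputable def linEL (q k : ℝ) (u : ℝ → ℝ) (x : ℝ) : ℝ :=
  2 * iteratedDeriv 4 u x + 2 * q * iteratedDeriv 2 u x + k * u x

/-- The bilinear boundary term produced by integrating `linEL q k u * w` by parts twice. -/
noncomputable def boundaryForm (q : ℝ) (u w : ℝ → ℝ) (x : ℝ) : ℝ :=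
  2 * iteratedDeriv 3 u x * w x - 2 * iteratedDeriv 2 u x * iteratedDeriv 1 w x +
    2 * q * (iteratedDeriv 1 u x * w x)

/-- The clamped boundary values of `u` on `[a, b]`: values and slopes at both ends. -/
noncomputable def clampedData (a b : ℝ) (u : ℝ → ℝ) : Fin 4 → ℝ :=
  ![u a, deriv u a, u b, deriv u b]

/-- The squares of `u` and its derivatives are at most `M` on `[a, b]`, in the `L¹` sense up to
order four and pointwise up to order three. -/
def DerivSqBound (u : ℝ → ℝ) (a b M : ℝ) : Prop :=
  (∀ i ≤ 4, ∫ x in a..b, iteratedDeriv i u x ^ 2 ≤ M) ∧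
    ∀ i ≤ 3, ∀ x ∈ Icc a b, iteratedDeriv i u x ^ 2 ≤ M

theorem DerivSqBound.mono {u : ℝ → ℝ} {a b M M' : ℝ} (h : DerivSqBound u a b M) (hM : M ≤ M') :
    DerivSqBound u a b M' :=
  ⟨fun i hi => (h.1 i hi).trans hM, fun i hi x hx => (h.2 i hi x hx).trans hM⟩

theorem DerivSqBound.of_integral_le {u : ℝ → ℝ} (hu : ContDiff ℝ 4 u) {a b M : ℝ}
    (hab : 1 ≤ b - a) (h : ∀ i ≤ 4, ∫ x in a..b, iteratedDeriv i u x ^ 2 ≤ M) :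
    DerivSqBound u a b (3 * M) := by
  have hM : 0 ≤ M := (integral_sq_nonneg _ (by linarith)).trans (h 0 (by norm_num))
  refine ⟨fun i hi => (h i hi).trans (by linarith), fun i hi x hx => ?_⟩
  have hsob := sq_le_integral_of_one_le (hasDerivAt_iteratedDeriv hu (by omega : i < 4))
    (hu.continuous_iteratedDeriv (i + 1) (by exact_mod_cast (by omega : i + 1 ≤ 4))) hab hx
  linarith [h i (by omega), h (i + 1) (by omega)]

theorem continuous_linEL {u : ℝ → ℝ} (hu : ContDiff ℝ 4 u) (q k : ℝ) :
    Continuous (linEL q k u) := by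
  have hu0 := hu.continuous
  have hu2 := hu.continuous_iteratedDeriv 2 (by norm_num)
  unfold linEL
  fun_prop

theorem integral_linEL_mul {u w : ℝ → ℝ} (hu : ContDiff ℝ 4 u) (hw : ContDiff ℝ 2 w)
    (q k a b : ℝ) :
    ∫ x in a..b, (linEL q k u x * w x - (2 * iteratedDeriv 2 u x * iteratedDeriv 2 w x -
        2 * q * iteratedDeriv 1 u x * iteratedDeriv 1 w x + k * u x * w x)) =
      boundaryForm q u w b - boundaryForm q u w a := by
  have hu0 := hu.continuous
  have hu1 := hu.continuous_iteratedDeriv 1 (by norm_num)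
  have hu2 := hu.continuous_iteratedDeriv 2 (by norm_num)
  have hL := continuous_linEL hu q k
  have hw0 := hw.continuous
  have hw1 := hw.continuous_iteratedDeriv 1 (by norm_num)
  refine intervalIntegral.integral_eq_sub_of_hasDerivAt (fun x _ => ?_)
    (Continuous.intervalIntegrable (by fun_prop) _ _)
  have du1 := hasDerivAt_iteratedDeriv hu (i := 1) (by norm_num) x
  have du2 := hasDerivAt_iteratedDeriv hu (i := 2) (by norm_num) x
  have du3 := hasDerivAt_iteratedDeriv hu (i := 3) (by norm_num) x
  have dw0 := hasDerivAt_iteratedDeriv hw (i := 0) (by norm_num) x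
  have dw1 := hasDerivAt_iteratedDeriv hw (i := 1) (by norm_num) x
  rw [iteratedDeriv_zero, zero_add] at dw0
  convert! (((du3.const_mul 2).mul dw0).sub ((du2.const_mul 2).mul dw1)).add
    ((du1.mul dw0).const_mul (2 * q)) using 1
  simp only [linEL]
  ring

theorem integral_linEL_mul_self {u : ℝ → ℝ} (hu : ContDiff ℝ 4 u) (q k a b : ℝ) :
    ∫ x in a..b, linEL q k u x * u x =
      boundaryForm q u u b - boundaryForm q u u a + 2 * Eres (fun s => k / 2 * s ^ 2) q u a b := by
  have hu0 := hu.continuous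
  have hu1 := hu.continuous_iteratedDeriv 1 (by norm_num)
  have hu2 := hu.continuous_iteratedDeriv 2 (by norm_num)
  have hL := continuous_linEL hu q k
  rw [← integral_linEL_mul hu (hu.of_le (by norm_num)) q k, eres_eq_integral,
    ← intervalIntegral.integral_const_mul,
    ← intervalIntegral.integral_add (Continuous.intervalIntegrable (by fun_prop) _ _)
      (Continuous.intervalIntegrable (by fun_prop) _ _)]
  congr 1 with x
  ring

theorem two_mul_abs_mul_le {θ : ℝ} (hθ : 0 < θ) (s t : ℝ) :
    2 * |s * t| ≤ θ * s ^ 2 + t ^ 2 / θ := by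
  have hsq : 0 ≤ (θ * |s| - |t|) ^ 2 / θ := by positivity
  have hexpand : (θ * |s| - |t|) ^ 2 / θ = θ * s ^ 2 - 2 * |s * t| + t ^ 2 / θ := by
    rw [← sq_abs s, ← sq_abs t, abs_mul]
    field_simp
    ring
  linarith

theorem abs_boundaryForm_self_le {u : ℝ → ℝ} {x Y Z : ℝ} (h0 : u x ^ 2 ≤ Y)
    (h1 : iteratedDeriv 1 u x ^ 2 ≤ Y) (h2 : iteratedDeriv 2 u x ^ 2 ≤ Z)
    (h3 : iteratedDeriv 3 u x ^ 2 ≤ Z) (q : ℝ) {θ : ℝ} (hθ : 0 < θ) :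
    |boundaryForm q u u x| ≤ 2 * θ * Z + (2 / θ + 2 * |q|) * Y := by
  have e1 := two_mul_abs_mul_le hθ (iteratedDeriv 3 u x) (u x)
  have e2 := two_mul_abs_mul_le hθ (iteratedDeriv 2 u x) (iteratedDeriv 1 u x)
  have e3 := two_mul_abs_mul_le one_pos (iteratedDeriv 1 u x) (u x)
  have hq : |q| * (2 * |iteratedDeriv 1 u x * u x|) ≤ |q| * (2 * Y) :=
    mul_le_mul_of_nonneg_left (by linarith) (abs_nonneg q)
  have hθZ2 := mul_le_mul_of_nonneg_left h2 hθ.le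
  have hθZ3 := mul_le_mul_of_nonneg_left h3 hθ.le
  have hY0 := div_le_div_of_nonneg_right h0 hθ.le
  have hY1 := div_le_div_of_nonneg_right h1 hθ.le
  calc |boundaryForm q u u x|
      ≤ 2 * |iteratedDeriv 3 u x * u x| + 2 * |iteratedDeriv 2 u x * iteratedDeriv 1 u x| +
          |q| * (2 * |iteratedDeriv 1 u x * u x|) := by
        refine (abs_add_le _ _).trans (add_le_add ((abs_sub _ _).trans ?_) ?_)
        · simp only [mul_assoc, abs_mul, abs_two, le_refl]
        · simp only [abs_mul, abs_two]
          exact le_of_eq (by ring)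
    _ ≤ (θ * Z + Y / θ) + (θ * Z + Y / θ) + |q| * (2 * Y) := by linarith
    _ = 2 * θ * Z + (2 / θ + 2 * |q|) * Y := by ring

theorem integral_mul_le {f g : ℝ → ℝ} (hf : Continuous f) (hg : Continuous g) {a b θ : ℝ}
    (hab : a ≤ b) (hθ : 0 < θ) :
    2 * ∫ x in a..b, f x * g x ≤ θ * (∫ x in a..b, f x ^ 2) + (∫ x in a..b, g x ^ 2) / θ := by
  rw [← intervalIntegral.integral_const_mul, ← intervalIntegral.integral_const_mul,
    ← intervalIntegral.integral_div,
    ← intervalIntegral.integral_add (Continuous.intervalIntegrable (by fun_prop) _ _)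
      (Continuous.intervalIntegrable (by fun_prop) _ _)]
  refine integral_le_integral_of_continuous (by fun_prop) (by fun_prop) hab fun x _ => ?_
  linarith [two_mul_abs_mul_le hθ (f x) (g x), le_abs_self (f x * g x)]

theorem integral_iteratedDeriv_four_sq_le {u : ℝ → ℝ} (hu : ContDiff ℝ 4 u) (q k : ℝ) {a b : ℝ}
    (hab : a ≤ b) :
    ∫ x in a..b, iteratedDeriv 4 u x ^ 2 ≤ (∫ x in a..b, linEL q k u x ^ 2) +
      4 * q ^ 2 * (∫ x in a..b, iteratedDeriv 2 u x ^ 2) + k ^ 2 * ∫ x in a..b, u x ^ 2 := by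
  have hu0 := hu.continuous
  have hu2 := hu.continuous_iteratedDeriv 2 (by norm_num)
  have hL := continuous_linEL hu q k
  rw [← intervalIntegral.integral_const_mul, ← intervalIntegral.integral_const_mul,
    ← integral_add_add (by fun_prop) (by fun_prop) (by fun_prop)]
  refine integral_le_integral_of_continuous (by fun_prop) (by fun_prop) hab
    fun x _ => ?_
  simp only [linEL]
  nlinarith [sq_nonneg (2 * iteratedDeriv 4 u x + 2 * q * iteratedDeriv 2 u x + k * u x +
      2 * q * iteratedDeriv 2 u x),
    sq_nonneg (2 * iteratedDeriv 4 u x + 2 * q * iteratedDeriv 2 u x + k * u x + k * u x),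
    sq_nonneg (2 * q * iteratedDeriv 2 u x - k * u x)]

namespace HasInterp

variable {c k q : ℝ}

theorem integral_iteratedDeriv_three_sq_le (h : HasInterp c fun s => k / 2 * s ^ 2) {u : ℝ → ℝ}
    (hu : ContDiff ℝ 4 u) {a b : ℝ} (hab : 1 ≤ b - a) :
    c * ∫ x in a..b, iteratedDeriv 3 u x ^ 2 ≤
      k / 2 * (∫ x in a..b, iteratedDeriv 2 u x ^ 2) +
        4 * ∫ x in a..b, iteratedDeriv 4 u x ^ 2 := by
  have hinterp := h a b hab (deriv^[2] u) (hu.iterate_deriv' 2 2)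
  rw [intervalIntegral.integral_const_mul] at hinterp
  simpa only [iteratedDeriv_eq_iterate, ← Function.iterate_add_apply] using hinterp

theorem exists_derivSqBound_hTwoNormSq (h : HasInterp c fun s => k / 2 * s ^ 2) (hc : 0 < c)
    (q : ℝ) :
    ∃ D > 0, ∀ a b : ℝ, 1 ≤ b - a → ∀ u : ℝ → ℝ, ContDiff ℝ 4 u →
      DerivSqBound u a b (D * (hTwoNormSq u a b + ∫ x in a..b, linEL q k u x ^ 2)) := by
  let D₄ : ℝ := 1 + 4 * q ^ 2 + k ^ 2
  let D₃ : ℝ := (|k| + 4 * D₄) / c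
  have hD₄ : 1 ≤ D₄ := by simp only [D₄]; nlinarith [sq_nonneg q, sq_nonneg k]
  have hD₃ : 0 ≤ D₃ := by positivity
  refine ⟨3 * (D₃ + D₄), by positivity, fun a b hab u hu => ?_⟩
  have hab' : a ≤ b := by linarith
  have n0 := integral_sq_nonneg u hab'
  have n1 := integral_sq_nonneg (iteratedDeriv 1 u) hab'
  have n2 := integral_sq_nonneg (iteratedDeriv 2 u) hab'
  have nF := integral_sq_nonneg (linEL q k u) hab'
  set Y := hTwoNormSq u a b + ∫ x in a..b, linEL q k u x ^ 2
  have hYdef : Y = (∫ x in a..b, u x ^ 2) + (∫ x in a..b, iteratedDeriv 1 u x ^ 2) +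
    (∫ x in a..b, iteratedDeriv 2 u x ^ 2) + ∫ x in a..b, linEL q k u x ^ 2 := rfl
  have hY0 : 0 ≤ Y := by linarith
  have i4 : ∫ x in a..b, iteratedDeriv 4 u x ^ 2 ≤ D₄ * Y := by
    refine (integral_iteratedDeriv_four_sq_le hu q k hab').trans ?_
    calc _ ≤ Y + 4 * q ^ 2 * Y + k ^ 2 * Y := by gcongr <;> linarith
      _ = D₄ * Y := by ring
  have i3 : ∫ x in a..b, iteratedDeriv 3 u x ^ 2 ≤ D₃ * Y := by
    rw [div_mul_eq_mul_div, le_div_iff₀ hc, mul_comm]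
    have hk2 : k / 2 * (∫ x in a..b, iteratedDeriv 2 u x ^ 2) ≤ |k| * Y :=
      mul_le_mul (by linarith [le_abs_self k, abs_nonneg k]) (by linarith) n2 (abs_nonneg k)
    linarith [h.integral_iteratedDeriv_three_sq_le hu hab]
  have hle3 : D₃ * Y ≤ (D₃ + D₄) * Y := by gcongr; linarith
  have hle4 : D₄ * Y ≤ (D₃ + D₄) * Y := by gcongr; linarith
  have hle1 : Y ≤ (D₃ + D₄) * Y := le_mul_of_one_le_left hY0 (by linarith)
  rw [mul_assoc]
  refine DerivSqBound.of_integral_le hu hab fun i hi => ?_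
  interval_cases i
  · simpa only [iteratedDeriv_zero] using (by linarith : _ ≤ _)
  all_goals linarith

theorem two_mul_hTwoNormSq_le {μ D θ : ℝ} {a b : ℝ} {u : ℝ → ℝ} (hu : ContDiff ℝ 4 u)
    (hab : a ≤ b) (hμ : 0 < μ) (hθ : 0 < θ)
    (hcoer : μ * hTwoNormSq u a b ≤ Eres (fun s => k / 2 * s ^ 2) q u a b)
    (hreg : DerivSqBound u a b (D * (hTwoNormSq u a b + ∫ x in a..b, linEL q k u x ^ 2))) :
    3 / 2 * μ * hTwoNormSq u a b ≤ (∫ x in a..b, linEL q k u x ^ 2) / (2 * μ) +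
      4 * θ * (D * (hTwoNormSq u a b + ∫ x in a..b, linEL q k u x ^ 2)) +
        (4 / θ + 4 * |q|) * ‖clampedData a b u‖ ^ 2 := by
  have hdata : ∀ i, clampedData a b u i ^ 2 ≤ ‖clampedData a b u‖ ^ 2 := fun i => by
    rw [← sq_abs]
    exact pow_le_pow_left₀ (abs_nonneg _) (norm_le_pi_norm (clampedData a b u) i) 2
  have hbdry_a := abs_boundaryForm_self_le (hdata 0) (by rw [iteratedDeriv_one]; exact hdata 1)
    (hreg.2 2 (by norm_num) a (left_mem_Icc.2 hab)) (hreg.2 3 le_rfl a (left_mem_Icc.2 hab)) q hθ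
  have hbdry_b := abs_boundaryForm_self_le (hdata 2) (by rw [iteratedDeriv_one]; exact hdata 3)
    (hreg.2 2 (by norm_num) b (right_mem_Icc.2 hab)) (hreg.2 3 le_rfl b (right_mem_Icc.2 hab)) q hθ
  have hyoung := integral_mul_le hu.continuous (continuous_linEL hu q k) hab hμ
  have hweak := integral_linEL_mul_self hu q k a b
  have hcomm : ∫ x in a..b, u x * linEL q k u x = ∫ x in a..b, linEL q k u x * u x := by
    simp only [mul_comm]
  have hle := mul_le_mul_of_nonneg_left (integral_sq_le_hTwoNormSq u hab) hμ.le
  have hhalf : (∫ x in a..b, linEL q k u x ^ 2) / (2 * μ) =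
      (∫ x in a..b, linEL q k u x ^ 2) / μ / 2 := by rw [div_div, mul_comm 2 μ]
  have hdouble : 4 / θ = 2 * (2 / θ) := by ring
  rw [hhalf, hdouble]
  linarith [le_of_abs_le hbdry_a, neg_le_of_abs_le hbdry_b]

theorem exists_derivSqBound (h : HasInterp c fun s => k / 2 * s ^ 2) (hc : 0 < c) (hk : 0 < k)
    (hq : 4 * q < c) :
    ∃ C > 0, ∀ a b : ℝ, 1 ≤ b - a → ∀ u : ℝ → ℝ, ContDiff ℝ 4 u →
      DerivSqBound u a b
        (C * (‖clampedData a b u‖ ^ 2 + ∫ x in a..b, linEL q k u x ^ 2)) := by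
  obtain ⟨μ, hμ, hcoer⟩ := h.exists_hTwoNormSq_le hc (half_pos hk) hq
  obtain ⟨D, hD, hreg⟩ := h.exists_derivSqBound_hTwoNormSq hc q
  let θ : ℝ := μ / (8 * D)
  let A : ℝ := (1 / (2 * μ) + μ / 2 + (4 / θ + 4 * |q|)) / μ
  have hθ : 0 < θ := by positivity
  refine ⟨D * (A + 1), by positivity, fun a b hab u hu => (hreg a b hab u hu).mono ?_⟩
  have hest := two_mul_hTwoNormSq_le hu (by linarith) hμ hθ
    (hcoer a b hab u (hu.of_le (by norm_num))) (hreg a b hab u hu)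
  have hF := integral_sq_nonneg (linEL q k u) (a := a) (b := b) (by linarith)
  have hY : 0 ≤ ‖clampedData a b u‖ ^ 2 := by positivity
  set X := hTwoNormSq u a b
  set F := ∫ x in a..b, linEL q k u x ^ 2
  set Y := ‖clampedData a b u‖ ^ 2
  have hθD : 4 * θ * (D * (X + F)) = μ / 2 * (X + F) := by
    simp only [θ]
    field_simp
    ring
  have hX : X ≤ A * (Y + F) := by
    rw [div_mul_eq_mul_div, le_div_iff₀ hμ]
    have hFdiv : F / (2 * μ) = 1 / (2 * μ) * F := by ring
    have hcoefF : 0 ≤ (1 / (2 * μ) + μ / 2) * Y := by positivity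
    have hcoefY : 0 ≤ (4 / θ + 4 * |q|) * F := by positivity
    linarith
  rw [mul_assoc]
  exact mul_le_mul_of_nonneg_left (by linarith) hD.le

end HasInterp

/-! ### Linear clamped problems -/

section LinearODE

variable {E : Type*} [NormedAddCommGroup E] [NormedSpace ℝ E]

/-- The solution of `y' = A y + F` with `y a = y₀`, by variation of constants. -/
noncomputable def duhamel (A : E →L[ℝ] E) (F : ℝ → E) (a : ℝ) (y₀ : E) (x : ℝ) : E :=
  NormedSpace.exp ((x - a) • A) (y₀ + ∫ s in a..x, NormedSpace.exp ((a - s) • A) (F s))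

theorem duhamel_self (A : E →L[ℝ] E) (F : ℝ → E) (a : ℝ) (y₀ : E) :
    duhamel A F a y₀ a = y₀ := by
  simp [duhamel]

theorem hasDerivAt_duhamel [CompleteSpace E] (A : E →L[ℝ] E) {F : ℝ → E} (hF : Continuous F)
    (a : ℝ) (y₀ : E) (x : ℝ) :
    HasDerivAt (duhamel A F a y₀) (A (duhamel A F a y₀ x) + F x) x := by
  have hexp : ∀ t : ℝ, HasDerivAt (fun r : ℝ => NormedSpace.exp (r • A))
      (A * NormedSpace.exp (t • A)) t := fun t => hasDerivAt_exp_smul_const' A t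
  have hcexp : Continuous fun r : ℝ => NormedSpace.exp (r • A) :=
    continuous_iff_continuousAt.2 fun t => (hexp t).continuousAt
  have hcint : Continuous fun s => NormedSpace.exp ((a - s) • A) (F s) :=
    (hcexp.comp (by fun_prop : Continuous fun s : ℝ => a - s)).clm_apply hF
  have hinv : NormedSpace.exp ((x - a) • A) * NormedSpace.exp ((a - x) • A) = 1 := by
    let _ : NormedAlgebra ℚ (E →L[ℝ] E) := NormedAlgebra.restrictScalars ℚ ℝ _
    rw [← NormedSpace.exp_add_of_commute
      (((Commute.refl A).smul_left _).smul_right _), ← add_smul]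
    simp
  convert! ((hexp (x - a)).comp_sub_const x a).clm_apply
    ((hcint.integral_hasStrictDerivAt a x).hasDerivAt.const_add y₀) using 1
  congr 1
  simpa using (congrArg (fun T : E →L[ℝ] E => T (F x)) hinv).symm

end LinearODE

/-- The companion operator of the scalar equation `u⁽ⁿ⁺¹⁾ = ∑ i, c i * u⁽ⁱ⁾`. -/
noncomputable def companion {n : ℕ} (c : Fin (n + 1) → ℝ) :
    (Fin (n + 1) → ℝ) →L[ℝ] (Fin (n + 1) → ℝ) :=
  .pi (Fin.snoc (fun i : Fin n => .proj i.succ) (∑ j, c j • .proj j))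

theorem companion_castSucc {n : ℕ} (c y : Fin (n + 1) → ℝ) (i : Fin n) :
    companion c y i.castSucc = y i.succ := by
  simp [companion]

theorem companion_last {n : ℕ} (c y : Fin (n + 1) → ℝ) :
    companion c y (Fin.last n) = ∑ j, c j * y j := by
  simp [companion]

theorem exists_linear_ode_solution {n : ℕ} (c : Fin (n + 1) → ℝ) {f : ℝ → ℝ} (hf : Continuous f)
    (a : ℝ) (y₀ : Fin (n + 1) → ℝ) :
    ∃ u : ℝ → ℝ, ContDiff ℝ (n + 1 : ℕ) u ∧
      (∀ x, iteratedDeriv (n + 1) u x = (∑ i, c i * iteratedDeriv i u x) + f x) ∧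
      ∀ i : Fin (n + 1), iteratedDeriv i u a = y₀ i := by
  let F : ℝ → Fin (n + 1) → ℝ := fun x => Pi.single (Fin.last n) (f x)
  let y := duhamel (companion c) F a y₀
  have hy : ∀ x i, HasDerivAt (y · i) (companion c (y x) i + F x i) x := fun x =>
    hasDerivAt_pi.1 (hasDerivAt_duhamel (companion c)
      ((continuous_single (Fin.last n)).comp hf) a y₀ x)
  have hiter : ∀ i : Fin (n + 1), iteratedDeriv i (y · 0) = (y · i) := by
    refine Fin.induction iteratedDeriv_zero fun i ih => funext fun x => ?_
    rw [Fin.val_succ, iteratedDeriv_succ, ← Fin.val_castSucc, ih, (hy x _).deriv,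
      companion_castSucc]
    simp [F, (Fin.castSucc_lt_last i).ne]
  have htop : ∀ x, HasDerivAt (iteratedDeriv n (y · 0))
      ((∑ i, c i * iteratedDeriv i (y · 0) x) + f x) x := fun x => by
    have hlast := hy x (Fin.last n)
    rw [companion_last, ← hiter (Fin.last n)] at hlast
    simpa [F, hiter] using hlast
  have hode : iteratedDeriv (n + 1) (y · 0) =
      fun x => (∑ i : Fin (n + 1), c i * iteratedDeriv i (y · 0) x) + f x :=
    funext fun x => by rw [iteratedDeriv_succ, (htop x).deriv]
  have hdiff : ∀ m < n + 1, Differentiable ℝ (iteratedDeriv m (y · 0)) := fun m hm x =>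
    hiter ⟨m, hm⟩ ▸ (hy x ⟨m, hm⟩).differentiableAt
  refine ⟨(y · 0), contDiff_nat_iff_iteratedDeriv.2 ⟨fun m hm => ?_, hdiff⟩, congrFun hode,
    fun i => hiter i ▸ congrFun (duhamel_self _ _ _ _) i⟩
  rcases hm.lt_or_eq with hlt | rfl
  · exact (hdiff m hlt).continuous
  · rw [hode]
    exact (continuous_finsetSum _ fun (i : Fin (n + 1)) _ =>
      (hdiff i i.2).continuous.const_mul _).add hf

theorem exists_linEL_eq (q k : ℝ) {f : ℝ → ℝ} (hf : Continuous f) (a : ℝ) (y₀ : Fin 4 → ℝ) :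
    ∃ u : ℝ → ℝ, ContDiff ℝ 4 u ∧ linEL q k u = f ∧ ∀ i : Fin 4, iteratedDeriv i u a = y₀ i := by
  obtain ⟨u, hu, hode, hinit⟩ := exists_linear_ode_solution ![-(k / 2), 0, -q, 0]
    (hf.div_const 2) a y₀
  refine ⟨u, hu, funext fun x => ?_, hinit⟩
  rw [linEL, hode x]
  simp only [Nat.succ_eq_add_one, Nat.reduceAdd, Fin.sum_univ_succ, Fin.isValue,
    Matrix.cons_val_zero, Fin.coe_ofNat_eq_mod, Nat.zero_mod, iteratedDeriv_zero, neg_mul,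
    Matrix.cons_val_succ, Fin.val_succ, zero_add, iteratedDeriv_one, zero_mul, Finset.univ_unique,
    Fin.default_eq_zero, Matrix.cons_val_fin_one, Fin.val_eq_zero, Finset.sum_const_zero, add_zero]
  ring

theorem linEL_add {u w : ℝ → ℝ} (hu : ContDiff ℝ 4 u) (hw : ContDiff ℝ 4 w) (q k : ℝ) :
    linEL q k (u + w) = linEL q k u + linEL q k w := by
  ext x
  have h24 : ((2 : ℕ) : WithTop ℕ∞) ≤ 4 := by norm_num
  simp only [linEL, Pi.add_apply, iteratedDeriv_add hu.contDiffAt hw.contDiffAt,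
    iteratedDeriv_add (hu.of_le h24).contDiffAt (hw.of_le h24).contDiffAt]
  ring

theorem linEL_sub {u w : ℝ → ℝ} (hu : ContDiff ℝ 4 u) (hw : ContDiff ℝ 4 w) (q k : ℝ) :
    linEL q k (u - w) = linEL q k u - linEL q k w := by
  rw [eq_sub_iff_add_eq, ← linEL_add (u := u - w) (hu.sub hw) hw, sub_add_cancel]

theorem linEL_const_smul (r q k : ℝ) (u : ℝ → ℝ) : linEL q k (r • u) = r • linEL q k u := by
  ext x
  simp only [linEL, Pi.smul_apply, iteratedDeriv_const_smul_field, smul_eq_mul]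
  ring

theorem clampedData_add {u w : ℝ → ℝ} (hu : Differentiable ℝ u) (hw : Differentiable ℝ w)
    (a b : ℝ) : clampedData a b (u + w) = clampedData a b u + clampedData a b w := by
  simp [clampedData, deriv_add (hu _) (hw _)]

theorem clampedData_sub {u w : ℝ → ℝ} (hu : Differentiable ℝ u) (hw : Differentiable ℝ w)
    (a b : ℝ) : clampedData a b (u - w) = clampedData a b u - clampedData a b w := by
  rw [eq_sub_iff_add_eq, ← clampedData_add (hu.sub hw) hw, sub_add_cancel]

theorem clampedData_const_smul (r a b : ℝ) (u : ℝ → ℝ) :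
    clampedData a b (r • u) = r • clampedData a b u := by
  simp [clampedData, deriv_const_smul_field]

section ClampedProblem

variable {c k q : ℝ}

/-- The solutions of the homogeneous equation `linEL q k u = 0`. -/
noncomputable def linELKernel (q k : ℝ) : Submodule ℝ (ℝ → ℝ) where
  carrier := {u | ContDiff ℝ 4 u ∧ linEL q k u = 0}
  add_mem' hu hw := ⟨hu.1.add hw.1, by rw [linEL_add hu.1 hw.1, hu.2, hw.2, add_zero]⟩
  zero_mem' := ⟨contDiff_const, by simpa using linEL_const_smul 0 q k 0⟩
  smul_mem' r u hu := ⟨hu.1.const_smul r, by rw [linEL_const_smul, hu.2, smul_zero]⟩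

/-- The Cauchy data at `a` of a homogeneous solution. -/
noncomputable def initialMap (q k a : ℝ) : linELKernel q k →ₗ[ℝ] Fin 4 → ℝ where
  toFun u i := iteratedDeriv i u.1 a
  map_add' u w := funext fun i => by
    have hi : ((i : ℕ) : WithTop ℕ∞) ≤ 4 := by exact_mod_cast i.is_lt.le
    exact iteratedDeriv_add (u.2.1.of_le hi).contDiffAt (w.2.1.of_le hi).contDiffAt
  map_smul' r u := funext fun i => iteratedDeriv_const_smul_field r u.1

/-- The clamped boundary values on `[a, b]` of a homogeneous solution. -/
noncomputable def clampedMap (q k a b : ℝ) : linELKernel q k →ₗ[ℝ] Fin 4 → ℝ where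
  toFun u := clampedData a b u
  map_add' u w := clampedData_add (u.2.1.differentiable (by norm_num))
    (w.2.1.differentiable (by norm_num)) a b
  map_smul' r u := clampedData_const_smul r a b u

theorem initialMap_surjective (q k a : ℝ) : Function.Surjective (initialMap q k a) := fun y => by
  obtain ⟨u, hu, hL, hinit⟩ := exists_linEL_eq q k continuous_zero a y
  exact ⟨⟨u, hu, hL⟩, funext hinit⟩

namespace HasInterp

theorem initialMap_eq_zero (h : HasInterp c fun s => k / 2 * s ^ 2) (hc : 0 < c) (hk : 0 < k)
    (hq : 4 * q < c) {a b : ℝ} (hab : 1 ≤ b - a) {u : linELKernel q k}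
    (hu : clampedMap q k a b u = 0) : initialMap q k a u = 0 := by
  obtain ⟨C, -, hC⟩ := h.exists_derivSqBound hc hk hq
  have hdata : clampedData a b u = 0 := hu
  have hzero := hC a b hab u u.2.1
  simp only [hdata, u.2.2, Pi.zero_apply, norm_zero, ne_eq, OfNat.ofNat_ne_zero, not_false_eq_true,
    zero_pow, intervalIntegral.integral_zero, add_zero, mul_zero] at hzero
  exact funext fun i => pow_eq_zero_iff two_ne_zero |>.1 <|
    le_antisymm (hzero.2 i (by omega) a (left_mem_Icc.2 (by linarith))) (sq_nonneg _)

theorem clampedMap_surjective (h : HasInterp c fun s => k / 2 * s ^ 2) (hc : 0 < c) (hk : 0 < k)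
    (hq : 4 * q < c) {a b : ℝ} (hab : 1 ≤ b - a) : Function.Surjective (clampedMap q k a b) := by
  obtain ⟨g, hg⟩ := (initialMap q k a).exists_rightInverse_of_surjective
    (LinearMap.range_eq_top.2 (initialMap_surjective q k a))
  have hinj : Function.Injective (clampedMap q k a b ∘ₗ g) := by
    refine (injective_iff_map_eq_zero _).2 fun y hy => ?_
    rw [← LinearMap.id_apply (R := ℝ) y, ← hg]
    exact h.initialMap_eq_zero hc hk hq hab hy
  exact Function.Surjective.of_comp (g := g) (LinearMap.injective_iff_surjective.1 hinj)

theorem exists_clamped_solution (h : HasInterp c fun s => k / 2 * s ^ 2) (hc : 0 < c) (hk : 0 < k)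
    (hq : 4 * q < c) {a b : ℝ} (hab : 1 ≤ b - a) {f : ℝ → ℝ} (hf : Continuous f)
    (y : Fin 4 → ℝ) :
    ∃ u : ℝ → ℝ, ContDiff ℝ 4 u ∧ linEL q k u = f ∧ clampedData a b u = y := by
  obtain ⟨w, hw, hwf, -⟩ := exists_linEL_eq q k hf a 0
  obtain ⟨⟨z, hz, hz0⟩, hzy⟩ := h.clampedMap_surjective hc hk hq hab (y - clampedData a b w)
  refine ⟨z + w, hz.add hw, by rw [linEL_add hz hw, hz0, hwf, zero_add], ?_⟩
  rw [clampedData_add (hz.differentiable (by norm_num)) (hw.differentiable (by norm_num))]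
  exact eq_sub_iff_add_eq.1 hzy

end HasInterp

end ClampedProblem

/-! ### The semilinear clamped problem -/

theorem exists_fixedPoint_of_contracting {X : Type*} [MetricSpace X] [CompleteSpace X] [Nonempty X]
    {T : X → X} {d : X → X → ℝ} {ρ M L : ℝ} (hρ0 : 0 ≤ ρ) (hρ1 : ρ < 1) (hM : 0 ≤ M)
    (hd : ∀ x y, d (T x) (T y) ≤ ρ * d x y) (hdist : ∀ x y, dist (T x) (T y) ≤ M * d x y)
    (hL : ∀ x y, d x y ≤ L * dist x y) : ∃ x, T x = x := by
  have hiter : ∀ (n : ℕ) x y, d (T^[n] x) (T^[n] y) ≤ ρ ^ n * d x y := by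
    intro n x y
    induction n with
    | zero => simp
    | succ n ih =>
      rw [Function.iterate_succ_apply', Function.iterate_succ_apply', pow_succ', mul_assoc]
      exact (hd _ _).trans (mul_le_mul_of_nonneg_left ih hρ0)
  have hlim : Tendsto (fun n : ℕ => M * L * ρ ^ n) atTop (𝓝 0) := by
    simpa using (tendsto_pow_atTop_nhds_zero_of_lt_one hρ0 hρ1).const_mul (M * L)
  obtain ⟨n, hn⟩ := (hlim.eventually_lt_const (half_pos one_pos)).exists
  have hcontr : ContractingWith (1 / 2) T^[n + 1] := by
    refine ⟨NNReal.half_lt_self one_ne_zero, LipschitzWith.of_dist_le_mul fun x y => ?_⟩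
    rw [Function.iterate_succ_apply', Function.iterate_succ_apply']
    calc dist (T (T^[n] x)) (T (T^[n] y)) ≤ M * (ρ ^ n * (L * dist x y)) := by
          refine (hdist _ _).trans (mul_le_mul_of_nonneg_left ((hiter n x y).trans ?_) hM)
          exact mul_le_mul_of_nonneg_left (hL x y) (pow_nonneg hρ0 n)
      _ = M * L * ρ ^ n * dist x y := by ring
      _ ≤ _ := mul_le_mul_of_nonneg_right (by simpa using hn.le) dist_nonneg
  exact ⟨_, hcontr.isFixedPt_fixedPoint_iterate⟩

/-- The `L²(a, b)` distance. -/
noncomputable def lTwoDist (a b : ℝ) (f g : ℝ → ℝ) : ℝ :=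
  √(∫ x in a..b, (f x - g x) ^ 2)

theorem lTwoDist_le {a b R : ℝ} {f g : ℝ → ℝ} (hf : Continuous f) (hg : Continuous g)
    (hab : a ≤ b) (h : ∀ x ∈ Icc a b, |f x - g x| ≤ R) : lTwoDist a b f g ≤ √(b - a) * R := by
  have hR : 0 ≤ R := (abs_nonneg _).trans (h a (left_mem_Icc.2 hab))
  refine (sqrt_le_sqrt (integral_le_integral_of_continuous (g := fun _ => R ^ 2) (by fun_prop)
    continuous_const hab fun x hx => ?_)).trans_eq ?_
  · exact sq_le_sq' (neg_le_of_abs_le (h x hx)) (le_of_abs_le (h x hx))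
  · rw [intervalIntegral.integral_const, smul_eq_mul, sqrt_mul (by linarith), sqrt_sq hR]

theorem integral_comp_sub_comp_sq_le {N : ℝ → ℝ} {ε : ℝ≥0} (hN : LipschitzWith ε N) {f g : ℝ → ℝ}
    (hf : Continuous f) (hg : Continuous g) {a b : ℝ} (hab : a ≤ b) :
    ∫ x in a..b, (N (f x) - N (g x)) ^ 2 ≤ ε ^ 2 * ∫ x in a..b, (f x - g x) ^ 2 := by
  have hN0 := hN.continuous
  rw [← intervalIntegral.integral_const_mul]
  refine integral_le_integral_of_continuous (by fun_prop) (by fun_prop) hab fun x _ => ?_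
  rw [← sq_abs, ← sq_abs (f x - g x), ← mul_pow, ← dist_eq, ← dist_eq]
  exact pow_le_pow_left₀ dist_nonneg (hN.dist_le_mul _ _) 2

section Semilinear

variable {a b C q k : ℝ} {N : ℝ → ℝ} {ε : ℝ≥0}

theorem derivSqBound_sub_of_lipschitzWith (hab : a ≤ b) (hC : 0 ≤ C)
    (hbound : ∀ u : ℝ → ℝ, ContDiff ℝ 4 u →
      DerivSqBound u a b (C * (‖clampedData a b u‖ ^ 2 + ∫ x in a..b, linEL q k u x ^ 2)))
    (hN : LipschitzWith ε N) (hε : C * ε ^ 2 ≤ 1 / 4) {u w φ ψ : ℝ → ℝ} (hu : ContDiff ℝ 4 u)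
    (hw : ContDiff ℝ 4 w) (hφ : Continuous φ) (hψ : Continuous ψ)
    (hdata : clampedData a b u = clampedData a b w)
    (huφ : linEL q k u = fun x => -N (φ x)) (hwψ : linEL q k w = fun x => -N (ψ x)) :
    DerivSqBound (u - w) a b ((1 / 2 * lTwoDist a b φ ψ) ^ 2) := by
  refine (hbound (u - w) (hu.sub hw)).mono ?_
  rw [clampedData_sub (hu.differentiable (by norm_num)) (hw.differentiable (by norm_num)), hdata,
    sub_self, norm_zero, linEL_sub hu hw, huφ, hwψ, mul_pow, lTwoDist,
    sq_sqrt (integral_sq_nonneg (fun x => φ x - ψ x) hab)]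
  have hint : ∫ x in a..b, ((fun x => -N (φ x)) - fun x => -N (ψ x)) x ^ 2 =
      ∫ x in a..b, (N (φ x) - N (ψ x)) ^ 2 := by
    congr 1 with x
    simp only [Pi.sub_apply]
    ring
  rw [hint]
  calc C * (0 ^ 2 + ∫ x in a..b, (N (φ x) - N (ψ x)) ^ 2)
      ≤ C * ε ^ 2 * ∫ x in a..b, (φ x - ψ x) ^ 2 := by
        rw [zero_pow two_ne_zero, zero_add, mul_assoc]
        exact mul_le_mul_of_nonneg_left (integral_comp_sub_comp_sq_le hN hφ hψ hab) hC
    _ ≤ (1 / 2) ^ 2 * ∫ x in a..b, (φ x - ψ x) ^ 2 :=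
        mul_le_mul_of_nonneg_right (hε.trans_eq (by norm_num))
          (integral_sq_nonneg (fun x => φ x - ψ x) hab)

theorem HasInterp.exists_semilinear_solution_of_derivSqBound {c : ℝ}
    (h : HasInterp c fun s => k / 2 * s ^ 2) (hc : 0 < c) (hk : 0 < k) (hq : 4 * q < c)
    (hab : 1 ≤ b - a) (hC : 0 ≤ C)
    (hbound : ∀ u : ℝ → ℝ, ContDiff ℝ 4 u →
      DerivSqBound u a b (C * (‖clampedData a b u‖ ^ 2 + ∫ x in a..b, linEL q k u x ^ 2)))
    (hN : LipschitzWith ε N) (hε : C * ε ^ 2 ≤ 1 / 4) (y : Fin 4 → ℝ) :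
    ∃ u : ℝ → ℝ, ContDiff ℝ 4 u ∧ clampedData a b u = y ∧
      ∀ x ∈ Icc a b, linEL q k u x = -N (u x) := by
  have hab' : a ≤ b := by linarith
  have hext : ∀ ψ : C(Icc a b, ℝ), Continuous (IccExtend hab' ψ) := fun ψ =>
    ψ.continuous.Icc_extend'
  choose S hS4 hSL hSy using fun ψ : C(Icc a b, ℝ) => h.exists_clamped_solution hc hk hq hab
    (f := fun x => -N (IccExtend hab' ψ x)) (hN.continuous.comp (hext ψ)).neg y
  let T : C(Icc a b, ℝ) → C(Icc a b, ℝ) := fun ψ =>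
    ⟨fun x => S ψ x, (hS4 ψ).continuous.comp continuous_subtype_val⟩
  let d : C(Icc a b, ℝ) → C(Icc a b, ℝ) → ℝ := fun ψ χ =>
    lTwoDist a b (IccExtend hab' ψ) (IccExtend hab' χ)
  have hText : ∀ ψ, ∀ x ∈ Icc a b, IccExtend hab' (T ψ) x = S ψ x := fun ψ x hx =>
    IccExtend_of_mem hab' _ hx
  have hd0 : ∀ ψ χ, 0 ≤ 1 / 2 * d ψ χ := fun ψ χ => mul_nonneg (by norm_num) (sqrt_nonneg _)
  have hST : ∀ ψ χ, DerivSqBound (S ψ - S χ) a b ((1 / 2 * d ψ χ) ^ 2) := fun ψ χ =>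
    derivSqBound_sub_of_lipschitzWith hab' hC hbound hN hε (hS4 ψ) (hS4 χ) (hext ψ) (hext χ)
      ((hSy ψ).trans (hSy χ).symm) (hSL ψ) (hSL χ)
  have hcontr : ∀ ψ χ, d (T ψ) (T χ) ≤ 1 / 2 * d ψ χ := fun ψ χ => by
    have hint : ∫ x in a..b, (IccExtend hab' (T ψ) x - IccExtend hab' (T χ) x) ^ 2 =
        ∫ x in a..b, iteratedDeriv 0 (S ψ - S χ) x ^ 2 :=
      intervalIntegral.integral_congr fun x hx => by
        rw [uIcc_of_le hab'] at hx
        simp only [hText _ x hx, iteratedDeriv_zero, Pi.sub_apply]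
    exact sqrt_le_iff.2 ⟨hd0 ψ χ, hint.trans_le ((hST ψ χ).1 0 (by norm_num))⟩
  have hdist : ∀ ψ χ, dist (T ψ) (T χ) ≤ 1 / 2 * d ψ χ := fun ψ χ =>
    (ContinuousMap.dist_le (hd0 ψ χ)).2 fun x =>
      abs_le_of_sq_le_sq (by simpa [T] using (hST ψ χ).2 0 (by norm_num) x x.2) (hd0 ψ χ)
  have hd : ∀ ψ χ, d ψ χ ≤ √(b - a) * dist ψ χ := fun ψ χ =>
    lTwoDist_le (hext ψ) (hext χ) hab' fun x _ =>
      ContinuousMap.dist_apply_le_dist (f := ψ) (g := χ) (projIcc a b hab' x)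
  obtain ⟨ψ, hψ⟩ := exists_fixedPoint_of_contracting (by norm_num) (by norm_num) (by norm_num)
    hcontr hdist hd
  refine ⟨S ψ, hS4 ψ, hSy ψ, fun x hx => ?_⟩
  rw [hSL, ← hText ψ x hx, hψ]

theorem HasInterp.exists_semilinear_solution {c : ℝ} (h : HasInterp c fun s => k / 2 * s ^ 2)
    (hc : 0 < c) (hk : 0 < k) (hq : 4 * q < c) :
    ∃ ε₀ > 0, ∃ C > 0, ∀ (ε : ℝ≥0) (N : ℝ → ℝ), ε ≤ ε₀ → LipschitzWith ε N → N 0 = 0 →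
      ∀ a b : ℝ, 1 ≤ b - a → ∀ y : Fin 4 → ℝ, ∃ u : ℝ → ℝ, ContDiff ℝ 4 u ∧
        clampedData a b u = y ∧ (∀ x ∈ Icc a b, linEL q k u x = -N (u x)) ∧
        DerivSqBound u a b (C * ‖y‖ ^ 2) := by
  obtain ⟨C, hC, hbound⟩ := h.exists_derivSqBound hc hk hq
  let ε₀ : ℝ≥0 := NNReal.sqrt (1 / (4 * C)).toNNReal
  have hε₀ : C * (ε₀ : ℝ) ^ 2 = 1 / 4 := by
    rw [← NNReal.coe_pow, NNReal.sq_sqrt, Real.coe_toNNReal _ (by positivity)]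
    field_simp
  refine ⟨ε₀, by positivity, 2 * C, by positivity, fun ε N hε hN hN0 a b hab y => ?_⟩
  have hab' : a ≤ b := by linarith
  have hεC : C * (ε : ℝ) ^ 2 ≤ 1 / 4 := hε₀ ▸ by gcongr
  obtain ⟨u, hu, rfl, huL⟩ := h.exists_semilinear_solution_of_derivSqBound hc hk hq hab hC.le
    (hbound a b hab) hN hεC y
  refine ⟨u, hu, rfl, huL, (hbound a b hab u hu).mono ?_⟩
  have hu0 : ∫ x in a..b, u x ^ 2 ≤ C * (‖clampedData a b u‖ ^ 2 +
      ∫ x in a..b, linEL q k u x ^ 2) := by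
    simpa only [iteratedDeriv_zero] using (hbound a b hab u hu).1 0 (by norm_num)
  have hL : ∫ x in a..b, linEL q k u x ^ 2 ≤ ε ^ 2 * ∫ x in a..b, u x ^ 2 := by
    have hint : ∫ x in a..b, linEL q k u x ^ 2 = ∫ x in a..b, (N (u x) - N 0) ^ 2 :=
      intervalIntegral.integral_congr fun x hx => by
        rw [uIcc_of_le hab'] at hx
        simp only [huL x hx, hN0, sub_zero, neg_sq]
    simpa only [hint, sub_zero] using
      integral_comp_sub_comp_sq_le hN hu.continuous (g := fun _ => 0) continuous_const hab'
  have hI := integral_sq_nonneg u hab'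
  have hCL := mul_le_mul_of_nonneg_left hL hC.le
  have habsorb := mul_le_mul_of_nonneg_right hεC hI
  linarith

end Semilinear

/-! ### From critical points to minimizers -/

-- The bound `hfg` is only available where `|f| < η`; it is applied up to the first point at which
-- `|f|` reaches `η`, and there contradicts the smallness assumption.
theorem abs_le_of_sq_add_integral_lt {f f' g : ℝ → ℝ} (hf : ∀ x, HasDerivAt f (f' x) x)
    (hf' : Continuous f') (hg : Continuous g) (hg0 : ∀ x, 0 ≤ g x) {η : ℝ} (hη : 0 ≤ η)
    (hfg : ∀ x, |f x| < η → f x ^ 2 ≤ g x) {a b : ℝ}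
    (hsmall : f a ^ 2 + ((∫ x in a..b, g x) + ∫ x in a..b, f' x ^ 2) < η ^ 2) :
    ∀ x ∈ Icc a b, |f x| ≤ η := by
  have hc : Continuous f := continuous_iff_continuousAt.2 fun x => (hf x).continuousAt
  by_contra! hex
  obtain ⟨y, hy, hyη⟩ := hex
  obtain ⟨z, ⟨hz, hzη⟩, hleast⟩ := (isCompact_Icc.inter_right
    (isClosed_le continuous_const hc.abs)).exists_isLeast ⟨y, hy, hyη.le⟩
  have hosc := sq_le_sq_add_integral hf hf' (right_mem_Icc.2 hz.1) (left_mem_Icc.2 hz.1)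
  have hsq : ∫ x in a..z, f x ^ 2 ≤ ∫ x in a..z, g x := by
    refine intervalIntegral.integral_mono_on_of_le_Ioo hz.1
      (Continuous.intervalIntegrable (by fun_prop) _ _) (hg.intervalIntegrable _ _)
      fun x hx => hfg x ?_
    by_contra! hle
    exact (hleast ⟨⟨hx.1.le, hx.2.le.trans hz.2⟩, hle⟩).not_gt hx.2
  have hmono : ∀ F : ℝ → ℝ, Continuous F → (∀ x, 0 ≤ F x) →
      ∫ x in a..z, F x ≤ ∫ x in a..b, F x := fun F hF hF0 =>
    intervalIntegral.integral_mono_interval le_rfl hz.1 hz.2 (Eventually.of_forall hF0)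
      (hF.intervalIntegrable _ _)
  have hgz := hmono g hg hg0
  have hf'z := hmono (fun x => f' x ^ 2) (by fun_prop) fun x => sq_nonneg _
  have hηz : η ^ 2 ≤ f z ^ 2 := by
    rw [← sq_abs (f z)]
    exact pow_le_pow_left₀ hη hzη 2
  linarith

theorem integral_linEL_mul_eq_zero {u χ : ℝ → ℝ} (hu : ContDiff ℝ 4 u) (hχ : ContDiff ℝ 2 χ)
    {a b : ℝ} (hdata : clampedData a b χ = 0) (q k : ℝ) :
    ∫ x in a..b, (linEL q k u x * χ x - (2 * iteratedDeriv 2 u x * iteratedDeriv 2 χ x -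
      2 * q * iteratedDeriv 1 u x * iteratedDeriv 1 χ x + k * u x * χ x)) = 0 := by
  have hzero : χ a = 0 ∧ deriv χ a = 0 ∧ χ b = 0 ∧ deriv χ b = 0 :=
    ⟨congrFun hdata 0, congrFun hdata 1, congrFun hdata 2, congrFun hdata 3⟩
  rw [integral_linEL_mul hu hχ]
  simp only [boundaryForm, iteratedDeriv_one, hzero, mul_zero, sub_zero, add_zero]

theorem eres_le_of_linEL_eq {W : ℝ → ℝ} (hW : ContDiff ℝ 1 W) {k q : ℝ} {ε : ℝ≥0} {S : Set ℝ}
    (hS : Convex ℝ S) (hlip : LipschitzOnWith ε (fun s => deriv W s - k * s) S) {a b : ℝ}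
    (hab : a ≤ b) (hcoer : ∀ χ : ℝ → ℝ, ContDiff ℝ 2 χ →
      ε * ∫ x in a..b, χ x ^ 2 ≤ Eres (fun s => k / 2 * s ^ 2) q χ a b)
    {v w : ℝ → ℝ} (hv : ContDiff ℝ 4 v) (hw : ContDiff ℝ 2 w)
    (hdata : clampedData a b w = clampedData a b v)
    (hvEL : ∀ x ∈ Icc a b, linEL q 0 v x = -deriv W (v x)) (hvS : ∀ x ∈ Icc a b, v x ∈ S)
    (hwS : ∀ x ∈ Icc a b, w x ∈ S) : Eres W q v a b ≤ Eres W q w a b := by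
  have hv' : ContDiff ℝ 2 v := hv.of_le (by norm_num)
  obtain ⟨χ, hχ, rfl⟩ : ∃ χ, ContDiff ℝ 2 χ ∧ w = v + χ := ⟨w - v, hw.sub hv', by simp⟩
  have hχdata : clampedData a b χ = 0 := by
    rwa [clampedData_add (hv'.differentiable (by norm_num)) (hχ.differentiable (by norm_num)),
      add_eq_left] at hdata
  have hW0 := hW.continuous
  have hv0 := hv.continuous
  have hv1 := hv.continuous_iteratedDeriv 1 (by norm_num)
  have hL := continuous_linEL hv q 0
  have hχ0 := hχ.continuous
  have hχ1 := hχ.continuous_iteratedDeriv 1 (by norm_num)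
  have hw1 := hw.continuous_iteratedDeriv 1 (by norm_num)
  have hexpand : ∀ x ∈ Icc a b, (W (v x) - q * iteratedDeriv 1 v x ^ 2 + iteratedDeriv 2 v x ^ 2) +
      -(linEL q 0 v x * χ x - (2 * iteratedDeriv 2 v x * iteratedDeriv 2 χ x -
        2 * q * iteratedDeriv 1 v x * iteratedDeriv 1 χ x + 0 * v x * χ x)) +
      ((k / 2 * χ x ^ 2 - q * iteratedDeriv 1 χ x ^ 2 + iteratedDeriv 2 χ x ^ 2) - ε * χ x ^ 2) ≤
      W ((v + χ) x) - q * iteratedDeriv 1 (v + χ) x ^ 2 + iteratedDeriv 2 (v + χ) x ^ 2 := by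
    intro x hx
    have htaylor := neg_le_of_abs_le (abs_taylor_le_of_lipschitzOnWith
      (hW.differentiable (by norm_num)) hS hlip (hvS x hx) (hwS x hx))
    rw [Pi.add_apply, add_sub_cancel_left] at htaylor
    have hadd : ∀ i : ℕ, i ≤ 2 →
        iteratedDeriv i (v + χ) x = iteratedDeriv i v x + iteratedDeriv i χ x := fun i hi =>
      iteratedDeriv_add (hv'.of_le (by exact_mod_cast hi)).contDiffAt
        (hχ.of_le (by exact_mod_cast hi)).contDiffAt
    rw [hvEL x hx, hadd 1 (by norm_num), hadd 2 le_rfl, Pi.add_apply]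
    linarith
  have hint := integral_le_integral_of_continuous (by fun_prop) (by fun_prop) hab hexpand
  rw [integral_add_add (by fun_prop) (by fun_prop) (by fun_prop), intervalIntegral.integral_neg,
    integral_linEL_mul_eq_zero hv hχ hχdata,
    intervalIntegral.integral_sub (Continuous.intervalIntegrable (by fun_prop) _ _)
      (Continuous.intervalIntegrable (by fun_prop) _ _), intervalIntegral.integral_const_mul,
    ← eres_eq_integral, ← eres_eq_integral, ← eres_eq_integral (fun s => k / 2 * s ^ 2)] at hint
  linarith [hcoer χ hχ]

theorem linEL_const_add (q k p : ℝ) (u : ℝ → ℝ) (x : ℝ) :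
    linEL q 0 (fun x => p + u x) x = linEL q k u x - k * u x := by
  rw [linEL, linEL, iteratedDeriv_const_add (by norm_num), iteratedDeriv_const_add (by norm_num)]
  ring

theorem clampedData_const_add (a b p : ℝ) (u : ℝ → ℝ) :
    clampedData a b (fun x => p + u x) = ![p, 0, p, 0] + clampedData a b u := by
  simp [clampedData]

theorem exists_lipschitzWith_eq_deriv_sub {W : ℝ → ℝ} {p k η : ℝ} {ε : ℝ≥0} (hp : deriv W p = 0)
    (hη : 0 ≤ η)
    (hlip : LipschitzOnWith ε (fun s => deriv W s - k * s) (Metric.closedBall p η)) :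
    ∃ N : ℝ → ℝ, LipschitzWith ε N ∧ N 0 = 0 ∧
      ∀ s, |s| ≤ η → N s = deriv W (p + s) - k * s := by
  obtain ⟨N, hN, heq⟩ := hlip.extend_real
  have hNeq : ∀ s ∈ Metric.closedBall p η, N s = deriv W s - k * s := fun s hs => (heq hs).symm
  refine ⟨fun s => N (p + s) - N p, LipschitzWith.of_dist_le_mul fun s t => ?_, by simp,
    fun s hs => ?_⟩
  · simpa only [dist_sub_right, dist_add_left] using hN.dist_le_mul (p + s) (p + t)
  · have hmem : p + s ∈ Metric.closedBall p η := by simpa [dist_eq] using hs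
    simp only [hNeq _ hmem, hNeq _ (Metric.mem_closedBall_self hη), hp]
    ring

namespace HasInterp

theorem exists_critical {c k q : ℝ} (h : HasInterp c fun s => k / 2 * s ^ 2) (hc : 0 < c)
    (hk : 0 < k) (hq : 4 * q < c) :
    ∃ ε₀ > 0, ∃ C > 0, ∀ (W : ℝ → ℝ) (p η : ℝ) (ε : ℝ≥0), deriv W p = 0 → 0 ≤ η → ε ≤ ε₀ →
      LipschitzOnWith ε (fun s => deriv W s - k * s) (Metric.closedBall p η) →
      ∀ a b : ℝ, 1 ≤ b - a → ∀ y : Fin 4 → ℝ, C * ‖y‖ ^ 2 ≤ η ^ 2 →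
      ∃ u : ℝ → ℝ, ContDiff ℝ 4 u ∧ clampedData a b u = y ∧
        (∀ x ∈ Icc a b, linEL q 0 (fun x => p + u x) x = -deriv W (p + u x)) ∧
        DerivSqBound u a b (C * ‖y‖ ^ 2) := by
  obtain ⟨ε₀, hε₀, C, hC, hsol⟩ := h.exists_semilinear_solution hc hk hq
  refine ⟨ε₀, hε₀, C, hC, fun W p η ε hp hη hε hlip a b hab y hy => ?_⟩
  obtain ⟨N, hN, hN0, hNeq⟩ := exists_lipschitzWith_eq_deriv_sub hp hη hlip
  obtain ⟨u, hu, hdata, huL, hbound⟩ := hsol ε N hε hN hN0 a b hab y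
  refine ⟨u, hu, hdata, fun x hx => ?_, hbound⟩
  have hux : |u x| ≤ η := abs_le_of_sq_le_sq
    ((by simpa only [iteratedDeriv_zero] using hbound.2 0 (by norm_num) x hx : u x ^ 2 ≤ _).trans
      hy) hη
  rw [linEL_const_add q k, huL x hx, hNeq _ hux]
  ring

end HasInterp

theorem eres_const_add_le {W u : ℝ → ℝ} {p κ q a b M : ℝ} (hW : Continuous W)
    (hu : ContDiff ℝ 4 u) (hab : a ≤ b) (hκ : 0 ≤ κ)
    (hle : ∀ x ∈ Icc a b, W (p + u x) ≤ κ * u x ^ 2) (hM : DerivSqBound u a b M) :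
    Eres W q (fun x => p + u x) a b ≤ (κ + |q| + 1) * M := by
  have hu0 := hu.continuous
  have hWu : ∫ x in a..b, W (p + u x) ≤ κ * M := by
    refine (integral_le_integral_of_continuous (by fun_prop) (by fun_prop) hab hle).trans ?_
    rw [intervalIntegral.integral_const_mul]
    exact mul_le_mul_of_nonneg_left (by simpa only [iteratedDeriv_zero] using hM.1 0 (by norm_num))
      hκ
  have hq : -q * (∫ x in a..b, iteratedDeriv 1 u x ^ 2) ≤ |q| * M :=
    mul_le_mul (neg_le_abs q) (hM.1 1 (by norm_num)) (integral_sq_nonneg _ hab) (abs_nonneg q)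
  rw [eres_eq hW (contDiff_const.add (hu.of_le (by norm_num)))]
  simp only [iteratedDeriv_const_add one_pos, iteratedDeriv_const_add two_pos]
  linarith [hM.1 2 (by norm_num)]

theorem abs_le_of_eres_le {W w : ℝ → ℝ} {p κ μ q η a b e : ℝ} (hW : Continuous W)
    (hW0 : ∀ s, 0 ≤ W s) (hκ : 0 < κ) (hμ : 0 < μ) (hη : 0 ≤ η)
    (hquad : ∀ s, |s| ≤ η → κ * s ^ 2 ≤ W (p + s)) (hab : a ≤ b)
    (hcoer : ∀ v : ℝ → ℝ, ContDiff ℝ 2 v → μ * ((∫ x in a..b, W (v x)) +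
      (∫ x in a..b, iteratedDeriv 1 v x ^ 2) + ∫ x in a..b, iteratedDeriv 2 v x ^ 2) ≤
        Eres W q v a b)
    (hw : ContDiff ℝ 2 w) (he : Eres W q (fun x => p + w x) a b ≤ e)
    (hsmall : w a ^ 2 + (1 / κ + 1) * (e / μ) < η ^ 2) : ∀ x ∈ Icc a b, |w x| ≤ η := by
  have hw0 := hw.continuous
  have hw1 := hw.continuous_iteratedDeriv 1 (by norm_num)
  have hdw : ∀ x, HasDerivAt w (iteratedDeriv 1 w x) x := fun x => by
    simpa only [iteratedDeriv_zero] using hasDerivAt_iteratedDeriv hw (i := 0) (by norm_num) x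
  have henergy := (hcoer _ (contDiff_const.add hw)).trans he
  simp only [iteratedDeriv_const_add one_pos, iteratedDeriv_const_add two_pos] at henergy
  rw [mul_comm, ← le_div_iff₀ hμ] at henergy
  have hA : 0 ≤ ∫ x in a..b, W (p + w x) :=
    intervalIntegral.integral_nonneg hab fun x _ => hW0 _
  have hB := integral_sq_nonneg (iteratedDeriv 1 w) hab
  have hD := integral_sq_nonneg (iteratedDeriv 2 w) hab
  refine abs_le_of_sq_add_integral_lt hdw hw1 (g := fun x => 1 / κ * W (p + w x)) (by fun_prop)
    (fun x => mul_nonneg (by positivity) (hW0 _)) hη (fun x hx => ?_) ?_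
  · rw [one_div_mul_eq_div, le_div_iff₀ hκ, mul_comm]
    exact hquad _ hx.le
  · rw [intervalIntegral.integral_const_mul]
    have hscaled := mul_le_mul_of_nonneg_left
      (by linarith : ∫ x in a..b, W (p + w x) ≤ e / μ) (one_div_pos.2 hκ).le
    linarith

theorem eres_le_of_derivSqBound {W u w : ℝ → ℝ} {p k μ q η a b M : ℝ} {ε : ℝ≥0}
    (hW : ContDiff ℝ 1 W) (hW0 : ∀ s, 0 ≤ W s) (hp : W p = 0) (hp' : deriv W p = 0) (hk : 0 < k)
    (hμ : 0 < μ) (hη : 0 ≤ η) (hεk : ε ≤ k / 4)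
    (hlip : LipschitzOnWith ε (fun s => deriv W s - k * s) (Metric.closedBall p η)) (hab : a ≤ b)
    (hcoer : ∀ v : ℝ → ℝ, ContDiff ℝ 2 v → μ * ((∫ x in a..b, W (v x)) +
      (∫ x in a..b, iteratedDeriv 1 v x ^ 2) + ∫ x in a..b, iteratedDeriv 2 v x ^ 2) ≤
        Eres W q v a b)
    (hcoerSq : ∀ χ : ℝ → ℝ, ContDiff ℝ 2 χ →
      ε * ∫ x in a..b, χ x ^ 2 ≤ Eres (fun s => k / 2 * s ^ 2) q χ a b)
    (hu : ContDiff ℝ 4 u) (hw : ContDiff ℝ 2 w)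
    (hdata : clampedData a b w = clampedData a b u)
    (huEL : ∀ x ∈ Icc a b, linEL q 0 (fun x => p + u x) x = -deriv W (p + u x))
    (hM : DerivSqBound u a b M)
    (hsmall : M + (1 / (k / 4) + 1) * ((k + |q| + 1) * M / μ) < η ^ 2) :
    Eres W q (fun x => p + u x) a b ≤ Eres W q (fun x => p + w x) a b := by
  have hwell := fun s => quadratic_bounds_of_lipschitzOnWith (hW.differentiable (by norm_num)) hp
    hp' hlip (s := s)
  have huM : ∀ x ∈ Icc a b, u x ^ 2 ≤ M := by
    simpa only [iteratedDeriv_zero] using hM.2 0 (by norm_num)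
  have hM0 : 0 ≤ M := (sq_nonneg _).trans (huM a (left_mem_Icc.2 hab))
  have hMη : M ≤ η ^ 2 := hsmall.le.trans' (le_add_of_nonneg_right (by positivity))
  have huη : ∀ x ∈ Icc a b, |u x| ≤ η := fun x hx => abs_le_of_sq_le_sq ((huM x hx).trans hMη) hη
  have henergy : Eres W q (fun x => p + u x) a b ≤ (k + |q| + 1) * M := by
    refine eres_const_add_le hW.continuous hu hab hk.le (fun x hx => ?_) hM
    exact (hwell _ (huη x hx)).2.trans (mul_le_mul_of_nonneg_right (by linarith) (sq_nonneg _))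
  refine le_of_not_gt fun hlt => hlt.not_ge ?_
  have hwa : w a = u a := congrFun hdata 0
  have hwη : ∀ x ∈ Icc a b, |w x| ≤ η := by
    refine abs_le_of_eres_le hW.continuous hW0 (by positivity : 0 < k / 4) hμ hη (fun s hs => ?_)
      hab hcoer hw (hlt.le.trans henergy)
      (hsmall.trans_le' (add_le_add_left (hwa ▸ huM a (left_mem_Icc.2 hab)) _))
    exact (hwell s hs).1.trans' (mul_le_mul_of_nonneg_right (by linarith) (sq_nonneg _))
  have hball : ∀ s, |s| ≤ η → p + s ∈ Metric.closedBall p η := by simp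
  refine eres_le_of_linEL_eq hW (convex_closedBall p η) hlip hab hcoerSq (contDiff_const.add hu)
    (contDiff_const.add hw) ?_ huEL (fun x hx => hball _ (huη x hx))
    fun x hx => hball _ (hwη x hx)
  rw [clampedData_const_add, clampedData_const_add, hdata]

namespace HasInterp

theorem exists_minimizer {c p q : ℝ} {W : ℝ → ℝ} (h : HasInterp c W) (hc : 0 < c)
    (hW : ContDiff ℝ 2 W) (hW0 : ∀ s, 0 ≤ W s) (hp : W p = 0) (hp' : deriv W p = 0)
    (hk : 0 < deriv (deriv W) p) (hq : 4 * q < c) :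
    ∃ r > 0, ∃ C > 0, ∀ a b : ℝ, 1 ≤ b - a → ∀ y : Fin 4 → ℝ, ‖y‖ < r →
      ∃ u : ℝ → ℝ, ContDiff ℝ 4 u ∧ clampedData a b u = y ∧
        (∀ x ∈ Icc a b, linEL q 0 (fun x => p + u x) x = -deriv W (p + u x)) ∧
        DerivSqBound u a b (C * ‖y‖ ^ 2) ∧
        ∀ w : ℝ → ℝ, ContDiff ℝ 2 w → clampedData a b w = y →
          Eres W q (fun x => p + u x) a b ≤ Eres W q (fun x => p + w x) a b := by
  have hquad := h.half_deriv_deriv hW hp hp'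
  have hlip := fun ε : ℝ≥0 => exists_lipschitzOnWith_deriv_sub hW p (ε := ε)
  generalize deriv (deriv W) p = k at hk hquad hlip
  obtain ⟨μ, hμ, hcoer⟩ := h.exists_coercive hc hW.continuous hW0 hq
  obtain ⟨ν, hν, hcoerSq⟩ := hquad.exists_hTwoNormSq_le hc (half_pos hk) hq
  obtain ⟨ε₀, hε₀, C, hC, hcrit⟩ := hquad.exists_critical hc hk hq
  obtain ⟨ε, hε, hεε₀, hεk, hεν⟩ : ∃ ε : ℝ≥0, 0 < ε ∧ ε ≤ ε₀ ∧ ε ≤ k / 4 ∧ ε ≤ ν := by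
    have hkν : 0 < min (k / 4) ν := by positivity
    refine ⟨min ε₀ (min (k / 4) ν).toNNReal, lt_min hε₀ (toNNReal_pos.2 hkν), min_le_left _ _, ?_⟩
    rw [← le_min_iff, NNReal.coe_min, coe_toNNReal _ hkν.le]
    exact min_le_right _ _
  obtain ⟨η, hη, hlip⟩ := hlip ε hε
  let K : ℝ := 1 + (1 / (k / 4) + 1) * ((k + |q| + 1) / μ)
  have hK : 1 ≤ K := le_add_of_nonneg_right (by positivity)
  have hKC : 0 < K * C := by positivity
  refine ⟨η / √(K * C), by positivity, C, hC, fun a b hab y hy => ?_⟩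
  have hab' : a ≤ b := by linarith
  have hsmall : K * (C * ‖y‖ ^ 2) < η ^ 2 := by
    rw [← mul_assoc, ← sq_sqrt hKC.le, ← mul_pow, mul_comm]
    exact pow_lt_pow_left₀ ((lt_div_iff₀ (sqrt_pos.2 hKC)).1 hy) (by positivity) two_ne_zero
  obtain ⟨u, hu, hdata, huEL, hM⟩ := hcrit W p η ε hp' hη.le hεε₀ hlip a b hab y
    (hsmall.le.trans' (le_mul_of_one_le_left (by positivity) hK))
  refine ⟨u, hu, hdata, huEL, hM, fun w hw hwdata => ?_⟩
  refine eres_le_of_derivSqBound (hW.of_le one_le_two) hW0 hp hp' hk hμ hη.le hεk hlip hab'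
    (hcoer a b hab) (fun χ hχ => ?_) hu hw (hwdata.trans hdata.symm) huEL hM ?_
  · exact (hcoerSq a b hab χ hχ).trans' (mul_le_mul hεν (integral_sq_le_hTwoNormSq χ hab')
      (integral_sq_nonneg χ hab') hν.le)
  · convert hsmall using 1
    simp only [K]
    ring

end HasInterp

/-! ### Nondegenerate wells -/

theorem norm_vecFour_le {α₀ α₁ β₀ β₁ δ : ℝ} (hα : √(α₀ ^ 2 + α₁ ^ 2) ≤ δ)
    (hβ : √(β₀ ^ 2 + β₁ ^ 2) ≤ δ) : ‖![α₀, α₁, β₀, β₁]‖ ≤ δ := by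
  have habs : ∀ {s t : ℝ}, √(s ^ 2 + t ^ 2) ≤ δ → |s| ≤ δ ∧ |t| ≤ δ := fun {s t} h =>
    ⟨(abs_le_sqrt (le_add_of_nonneg_right (sq_nonneg t))).trans h,
      (abs_le_sqrt (le_add_of_nonneg_left (sq_nonneg s))).trans h⟩
  rw [pi_norm_le_iff_of_nonneg ((sqrt_nonneg _).trans hα)]
  simp [Fin.forall_fin_succ, habs hα, habs hβ]

theorem deriv_eq_zero_of_nonneg {W : ℝ → ℝ} (hW0 : ∀ s, 0 ≤ W s) {p : ℝ} (hp : W p = 0) :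
    deriv W p = 0 :=
  IsLocalMin.deriv_eq_zero (Eventually.of_forall fun s => hp.trans_le (hW0 s))

namespace DoubleWell

theorem apply_neg_one {W : ℝ → ℝ} (hW : DoubleWell W) : W (-1) = 0 :=
  (hW.2.1 1).symm.trans hW.2.2.2.2.1

theorem deriv_deriv_pos {W : ℝ → ℝ} (hW : DoubleWell W) : 0 < deriv (deriv W) (-1) := by
  have hp := hW.apply_neg_one
  obtain ⟨hreg, heven, hW0, -, -, -, c, hc, -, hquad⟩ := hW
  have hreg' : ContDiff ℝ 2 W := hreg.of_le (by norm_num)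
  have hc' : 0 < c / 2 := half_pos hc
  obtain ⟨η, hη, hlip⟩ := exists_lipschitzOnWith_deriv_sub hreg' (-1) (toNNReal_pos.2 hc')
  have hupper := (quadratic_bounds_of_lipschitzOnWith (hreg'.differentiable two_ne_zero) hp
    (deriv_eq_zero_of_nonneg hW0 hp) hlip (s := -η) (by rw [abs_neg, abs_of_pos hη])).2
  have hlower := hquad (1 + η) (by positivity)
  rw [heven (-1 + -η), coe_toNNReal _ hc'.le, neg_sq, neg_add, neg_neg, neg_neg] at hupper
  rw [add_sub_cancel_left, sq_abs] at hlower
  have hle := le_of_mul_le_mul_right (hlower.trans hupper) (by positivity)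
  linarith

end DoubleWell

theorem stmt7_general {W : ℝ → ℝ} (hW : ContDiff ℝ 2 W) (hW0 : ∀ s, 0 ≤ W s) {p : ℝ}
    (hp : W p = 0) (hk : 0 < deriv (deriv W) p) {qs : ℝ} (hqs : 0 < qs)
    (hinterp : ∀ a b : ℝ, a < b → ∀ u : ℝ → ℝ, ContDiff ℝ 2 u →
      qs * ∫ x in a..b, (deriv u x)^2 ≤
        (1 / (b - a)^2) * (∫ x in a..b, W (u x)) +
          (b - a)^2 * ∫ x in a..b, (deriv (deriv u) x)^2)
    {q : ℝ} (hq : q < qs / 4) :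
    ∃ δ₀ > (0:ℝ), ∃ C > (0:ℝ), ∀ a b : ℝ, b - a > 1 →
      ∀ δ α₀ α₁ β₀ β₁ : ℝ, δ < δ₀ → √(α₀^2 + α₁^2) ≤ δ → √(β₀^2 + β₁^2) ≤ δ →
      ∃ v : ℝ → ℝ, ContDiff ℝ 4 v ∧
        v a = p + α₀ ∧ deriv v a = α₁ ∧ v b = p + β₀ ∧ deriv v b = β₁ ∧
        (∀ u : ℝ → ℝ, ContDiff ℝ 2 u →
          u a = p + α₀ → deriv u a = α₁ → u b = p + β₀ → deriv u b = β₁ →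
          Eres W q v a b ≤ Eres W q u a b) ∧
        (∀ x ∈ Ioo a b,
          2 * iteratedDeriv 4 v x + 2 * q * iteratedDeriv 2 v x + deriv W (v x) = 0) ∧
        (∀ x ∈ Icc a b, |v x - p| ≤ C * δ) ∧
        (∀ k ∈ Finset.Icc 1 4, ∫ x in a..b, (iteratedDeriv k v x)^2 ≤ (C * δ)^2) ∧
        (∀ k ∈ Finset.Icc 1 3, ∀ x ∈ Icc a b, |iteratedDeriv k v x| ≤ C * δ) := by
  have hp' := deriv_eq_zero_of_nonneg hW0 hp
  obtain ⟨δ₀, hδ₀, C, hC, hmin⟩ := (hasInterp_of_interpolation hW.continuous hW0 hinterp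
    ).exists_minimizer hqs hW hW0 hp hp' hk (q := q) (by linarith)
  refine ⟨δ₀, hδ₀, √C, sqrt_pos.2 hC, fun a b hab δ α₀ α₁ β₀ β₁ hδ hα hβ => ?_⟩
  have hδ0 : 0 ≤ δ := (sqrt_nonneg _).trans hα
  have hy := norm_vecFour_le hα hβ
  obtain ⟨u, hu, hdata, huEL, hbound, humin⟩ := hmin a b hab.le _ (hy.trans_lt hδ)
  have hCδ : DerivSqBound u a b ((√C * δ) ^ 2) := hbound.mono <| by
    rw [mul_pow, sq_sqrt hC.le]
    gcongr
  have habs : ∀ {s}, s ^ 2 ≤ (√C * δ) ^ 2 → |s| ≤ √C * δ := fun h =>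
    abs_le_of_sq_le_sq h (by positivity)
  have hD : ∀ {k}, 1 ≤ k → iteratedDeriv k (fun x => p + u x) = iteratedDeriv k u := fun hk =>
    funext fun _ => iteratedDeriv_const_add hk p
  refine ⟨fun x => p + u x, contDiff_const.add hu, congrArg (p + ·) (congrFun hdata 0),
    (deriv_const_add p).trans (congrFun hdata 1), congrArg (p + ·) (congrFun hdata 2),
    (deriv_const_add p).trans (congrFun hdata 3), ?_, ?_, ?_, ?_, ?_⟩
  · intro w hw h0 h1 h2 h3
    simpa only [add_sub_cancel] using humin (fun x => w x - p) (hw.sub contDiff_const)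
      (by simp [clampedData, h0, h1, h2, h3])
  · intro x hx
    have hEL := huEL x (Ioo_subset_Icc_self hx)
    rw [linEL] at hEL
    linarith
  · intro x hx
    rw [add_sub_cancel_left]
    exact habs (by simpa only [iteratedDeriv_zero] using hCδ.2 0 (by norm_num) x hx)
  · intro k hk
    rw [Finset.mem_Icc] at hk
    rw [hD hk.1]
    exact hCδ.1 k hk.2
  · intro k hk x hx
    rw [Finset.mem_Icc] at hk
    rw [hD hk.1]
    exact habs (hCδ.2 k hk.2 x hx)

end

theorem stmt7 (W : ℝ → ℝ) (hW : DoubleWell W) (qs : ℝ) (hqs : 0 < qs)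
    -- qs is the constant of the one-dimensional interpolation inequality
    (hinterp : ∀ a b : ℝ, a < b → ∀ u : ℝ → ℝ, ContDiff ℝ 2 u →
      qs * ∫ x in a..b, (deriv u x)^2 ≤
        (1 / (b - a)^2) * (∫ x in a..b, W (u x)) +
          (b - a)^2 * ∫ x in a..b, (deriv (deriv u) x)^2)
    (q : ℝ) (hq0 : 0 ≤ q) (hq : q < qs / 4) :
    ∃ δ₀ > (0:ℝ), ∃ C > (0:ℝ),
      ∀ a b : ℝ, b - a > 1 →
      ∀ δ α₀ α₁ β₀ β₁ : ℝ, δ < δ₀ →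
        Real.sqrt (α₀^2 + α₁^2) ≤ δ → Real.sqrt (β₀^2 + β₁^2) ≤ δ →
      ∃ v : ℝ → ℝ, ContDiff ℝ 4 v ∧
        v a = -1 + α₀ ∧ deriv v a = α₁ ∧ v b = -1 + β₀ ∧ deriv v b = β₁ ∧
        -- v minimizes E(·; I) among C² functions with the same boundary conditions
        (∀ u : ℝ → ℝ, ContDiff ℝ 2 u →
          u a = -1 + α₀ → deriv u a = α₁ → u b = -1 + β₀ → deriv u b = β₁ →
          Eres W q v a b ≤ Eres W q u a b) ∧
        -- v solves the Euler–Lagrange equation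
        (∀ x ∈ Set.Ioo a b,
          2 * iteratedDeriv 4 v x + 2 * q * iteratedDeriv 2 v x + deriv W (v x) = 0) ∧
        -- L∞ bound on v + 1
        (∀ x ∈ Set.Icc a b, |v x + 1| ≤ C * δ) ∧
        -- L² bounds on derivatives of order 1,…,4
        (∀ k ∈ Finset.Icc 1 4, ∫ x in a..b, (iteratedDeriv k v x)^2 ≤ (C * δ)^2) ∧
        -- L∞ bounds on derivatives of order 1,…,3
        (∀ k ∈ Finset.Icc 1 3, ∀ x ∈ Set.Icc a b, |iteratedDeriv k v x| ≤ C * δ) := by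
  obtain ⟨δ₀, hδ₀, C, hC, h⟩ := stmt7_general (hW.1.of_le (by norm_num)) hW.2.2.1
    hW.apply_neg_one hW.deriv_deriv_pos hqs hinterp hq
  exact ⟨δ₀, hδ₀, C, hC, by simpa only [sub_neg_eq_add] using h⟩
end

section
/- Let F : ℝ⁴ → ℝ⁴ be a C⁴ mapping with F(x₀) = 0 for some x₀ ∈ ℝ⁴, and assume that the complexification of the Fréchet derivative DF(x₀) has exactly the four (distinct) eigenvalues γ + δi, γ − δi, −γ + δi, −γ − δi, where γ > 0 and δ ≠ 0. Then for every 0 < λ ≤ γ there exist constants C > 0, T₀ > 0 and R > 0 such that for all T > T₀, if x : [0,T] → ℝ⁴ is differentiable, satisfies x'(t) = F(x(t)) for all t ∈ [0,T], and x(t) ∈ B(x₀, R) for all t ∈ [0,T], then |x(t) − x₀| ≤ C exp(−λT/2) for all t ∈ [λT/(2γ), T − λT/(2γ)]. In particular, taking λ = γ, |x(T/2) − x₀| ≤ C exp(−γT/2). -/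
open MeasureTheory Real

/-!
Split `ℝ⁴` (or any finite-dimensional space) by the real and imaginary parts of the left
eigenvectors of the linearization into coordinates `s`, contracted at rate `γ`, and `u`, expanded at
rate `γ`. On a small ball the nonlinear part is at most `L (‖s‖ + ‖u‖)²`, and therefore
`exp (2γt - 4L ∫₀ᵗ (‖s‖ + ‖u‖)) (2‖s‖² - ‖u‖²)` is nonincreasing along solutions; this bounds `‖s‖`
forward in time, and by time reversal `‖u‖` backward in time. The integral in the exponent is at
first only known to be small compared with `γt`, which costs half of the rate; but the resulting
decay at rate `γ / 2` from both ends of `[0, T]` bounds the integral independently of `T`, and a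
second use of the same inequality gives the full rate `γ`.
-/

section SpectralCoordinates

open Polynomial Module

section transposeEnd

variable {R : Type*} (S : Type*) {M : Type*} [CommSemiring R] [CommSemiring S] [Algebra R S]
  [AddCommMonoid M] [Module R M]

/-- The transpose `φ ↦ φ ∘ f` of an endomorphism `f`, acting on the functionals with values in an
extension `S` of the scalars. Its eigenvectors are the left eigenvectors of `f` over `S`; using them
avoids extending the scalars of the space itself. -/
def transposeEnd (f : End R M) : End S (M →ₗ[R] S) :=
  LinearMap.lcomp S S f

@[simp]
theorem transposeEnd_apply (f : End R M) (φ : M →ₗ[R] S) (x : M) :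
    transposeEnd S f φ x = φ (f x) := rfl

theorem transposeEnd_zero : transposeEnd S (0 : End R M) = 0 := by
  ext
  simp

theorem transposeEnd_pow (f : End R M) (n : ℕ) :
    transposeEnd S (f ^ n) = transposeEnd S f ^ n := by
  induction n with
  | zero => rfl
  | succ n ih => rw [pow_succ', pow_succ, ← ih]; rfl

theorem aeval_transposeEnd (f : End R M) (p : R[X]) :
    aeval (transposeEnd S f) p = transposeEnd S (aeval f p) := by
  induction p using Polynomial.induction_on' with
  | add p q hp hq => ext; simp [hp, hq]
  | monomial n a => ext; simp [aeval_monomial, ← transposeEnd_pow]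

end transposeEnd

variable {K E : Type*} (L : Type*) [Field K] [Field L] [Algebra K L]
  [AddCommGroup E] [Module K E] [FiniteDimensional K E] {A : End K E}

theorem isSemisimple_transposeEnd [PerfectField K] (hA : A.IsSemisimple) :
    (transposeEnd L A).IsSemisimple := by
  have hsep : (minpoly K A).Separable :=
    PerfectField.separable_iff_squarefree.mpr hA.minpoly_squarefree
  refine End.isSemisimple_of_squarefree_aeval_eq_zero
    (hsep.map (f := algebraMap K L)).squarefree ?_
  rw [aeval_map_algebraMap, aeval_transposeEnd, minpoly.aeval, transposeEnd_zero]

variable {L}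

theorem aeval_charpoly_eq_zero_of_hasEigenvector_transposeEnd {μ : L} {ℓ : E →ₗ[K] L}
    (h : (transposeEnd L A).HasEigenvector μ ℓ) : aeval μ A.charpoly = 0 := by
  have hμ : aeval μ A.charpoly • ℓ = 0 := by
    rw [← eval_map_algebraMap, ← End.aeval_apply_of_hasEigenvector h, aeval_map_algebraMap,
      aeval_transposeEnd, LinearMap.aeval_self_charpoly, transposeEnd_zero, LinearMap.zero_apply]
  exact (smul_eq_zero.mp hμ).resolve_right h.2

variable (L) in
theorem exists_separating_eigenfunctionals [PerfectField K] [IsAlgClosed L]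
    (hA : A.IsSemisimple) :
    ∃ (n : ℕ) (μ : Fin n → L) (ℓ : Fin n → E →ₗ[K] L), (∀ i, aeval (μ i) A.charpoly = 0) ∧
      (∀ i y, ℓ i (A y) = μ i * ℓ i y) ∧ ∀ y, (∀ i, ℓ i y = 0) → y = 0 := by
  set S : Set (E →ₗ[K] L) := {ℓ | ∃ μ, (transposeEnd L A).HasEigenvector μ ℓ}
  obtain ⟨ℓ, hℓ, hℓspan, -⟩ := Submodule.exists_fun_fin_finrank_span_eq L S
  have hS : Submodule.span L S = ⊤ := by
    rw [eq_top_iff, ← (isSemisimple_transposeEnd L hA).iSup_eigenspace_eq_top]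
    refine iSup_le fun μ ℓ hℓ => ?_
    rcases eq_or_ne ℓ 0 with rfl | hne
    · exact zero_mem _
    · exact Submodule.subset_span ⟨μ, hℓ, hne⟩
  choose μ hμ using hℓ
  refine ⟨_, μ, ℓ, fun i => aeval_charpoly_eq_zero_of_hasEigenvector_transposeEnd (hμ i),
    fun i y => LinearMap.congr_fun (hμ i).apply_eq_smul y, fun y hy => ?_⟩
  have heval : LinearMap.applyₗ' L y = (0 : (E →ₗ[K] L) →ₗ[L] L) :=
    LinearMap.ext_on_range (hℓspan.trans hS) hy
  refine (forall_dual_apply_eq_zero_iff K y).mp fun f => (algebraMap K L).injective ?_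
  simpa using LinearMap.congr_fun heval (Algebra.linearMap K L ∘ₗ f)

theorem isSemisimple_of_nodup_aroots_charpoly [IsAlgClosed L] (h : (A.charpoly.aroots L).Nodup) :
    A.IsSemisimple := by
  have hsep : A.charpoly.Separable :=
    (nodup_aroots_iff_of_splits A.charpoly_monic.ne_zero (IsAlgClosed.splits _)).mp h
  exact End.isSemisimple_of_squarefree_aeval_eq_zero hsep.squarefree A.aeval_self_charpoly

end SpectralCoordinates

section HyperbolicSplitting

open scoped InnerProductSpace

variable {E G H : Type*} [NormedAddCommGroup E] [NormedSpace ℝ E]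
  [NormedAddCommGroup G] [InnerProductSpace ℝ G] [NormedAddCommGroup H] [InnerProductSpace ℝ H]

/-- A splitting of the phase space of `y' = A y` into the coordinates `p`, contracted at rate `γ`,
and `q`, expanded at rate `γ`. The contraction and expansion are expressed by the derivatives
`⟪p y, p (A y)⟫` and `⟪q y, q (A y)⟫` of `‖p y‖² / 2` and `‖q y‖² / 2`. -/
structure IsHyperbolicSplitting (A : E →L[ℝ] E) (γ : ℝ) (p : E →L[ℝ] G) (q : E →L[ℝ] H) :
    Prop where
  inner_stable_le : ∀ y, ⟪p y, p (A y)⟫_ℝ ≤ -γ * ‖p y‖ ^ 2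
  le_inner_unstable : ∀ y, γ * ‖q y‖ ^ 2 ≤ ⟪q y, q (A y)⟫_ℝ
  antilipschitz : ∃ c, AntilipschitzWith c (p.prod q)

theorem IsHyperbolicSplitting.exists_norm_le {A : E →L[ℝ] E} {γ : ℝ} {p : E →L[ℝ] G}
    {q : E →L[ℝ] H} (h : IsHyperbolicSplitting A γ p q) :
    ∃ c > 0, ∀ y, ‖y‖ ≤ c * (‖p y‖ + ‖q y‖) := by
  obtain ⟨c, hc⟩ := h.antilipschitz
  refine ⟨c + 1, by positivity, fun y => ?_⟩
  calc
    ‖y‖ ≤ c * ‖(p y, q y)‖ := by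
      simpa only [map_zero, dist_zero_right] using! hc.le_mul_dist y 0
    _ ≤ (c + 1) * (‖p y‖ + ‖q y‖) := by
      gcongr
      · simp
      · exact max_le (le_add_of_nonneg_right (norm_nonneg _))
          (le_add_of_nonneg_left (norm_nonneg _))

theorem real_inner_self_complex_mul (z μ : ℂ) : ⟪z, μ * z⟫_ℝ = μ.re * ‖z‖ ^ 2 := by
  rw [Complex.inner, Complex.sq_norm, Complex.normSq_apply]
  simp only [Complex.mul_re, Complex.mul_im, Complex.conj_re, Complex.conj_im]
  ring

variable [FiniteDimensional ℝ E] {ι : Type*} [Fintype ι]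

/-- The joint coordinate map of finitely many complex-valued functionals. The target carries the
Euclidean norm, so that the squared norm is the sum of the squared moduli. -/
noncomputable def coordinateMap (ℓ : ι → E →ₗ[ℝ] ℂ) : E →L[ℝ] EuclideanSpace ℂ ι :=
  LinearMap.toContinuousLinearMap ((WithLp.linearEquiv 2 ℝ (ι → ℂ)).symm ∘ₗ LinearMap.pi ℓ)

@[simp]
theorem coordinateMap_apply (ℓ : ι → E →ₗ[ℝ] ℂ) (y : E) (i : ι) :
    coordinateMap ℓ y i = ℓ i y := rfl

theorem inner_coordinateMap_of_eigenfunctional {A : E →L[ℝ] E} {μ : ι → ℂ} {ℓ : ι → E →ₗ[ℝ] ℂ}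
    (hℓ : ∀ i y, ℓ i (A y) = μ i * ℓ i y) (y : E) :
    ⟪coordinateMap ℓ y, coordinateMap ℓ (A y)⟫_ℝ = ∑ i, (μ i).re * ‖ℓ i y‖ ^ 2 := by
  simp only [PiLp.inner_apply, coordinateMap_apply, hℓ, real_inner_self_complex_mul]

theorem norm_sq_coordinateMap (ℓ : ι → E →ₗ[ℝ] ℂ) (y : E) :
    ‖coordinateMap ℓ y‖ ^ 2 = ∑ i, ‖ℓ i y‖ ^ 2 := by
  simp only [EuclideanSpace.norm_sq_eq, coordinateMap_apply]

theorem exists_isHyperbolicSplitting {A : E →L[ℝ] E} {γ : ℝ} (hγ : 0 < γ)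
    (hA : Module.End.IsSemisimple (A : E →ₗ[ℝ] E))
    (hspec : ∀ μ ∈ (A : E →ₗ[ℝ] E).charpoly.aroots ℂ, γ ≤ |μ.re|) :
    ∃ (ι κ : Type) (_ : Fintype ι) (_ : Fintype κ) (p : E →L[ℝ] EuclideanSpace ℂ ι)
      (q : E →L[ℝ] EuclideanSpace ℂ κ), IsHyperbolicSplitting A γ p q := by
  obtain ⟨n, μ, ℓ, hroot, heig, hsep⟩ := exists_separating_eigenfunctionals ℂ hA
  have hre : ∀ i, γ ≤ |(μ i).re| := fun i =>
    hspec _ (Polynomial.mem_aroots.mpr ⟨(LinearMap.charpoly_monic _).ne_zero, hroot i⟩)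
  let p := coordinateMap fun i : {i // (μ i).re < 0} => ℓ i
  let q := coordinateMap fun i : {i // 0 < (μ i).re} => ℓ i
  refine ⟨_, _, inferInstance, inferInstance, p, q, fun y => ?_, fun y => ?_, ?_⟩
  · rw [inner_coordinateMap_of_eigenfunctional fun i => heig i.1, norm_sq_coordinateMap,
      Finset.mul_sum]
    gcongr with i
    have := hre i
    rw [abs_of_neg i.2] at this
    linarith
  · rw [inner_coordinateMap_of_eigenfunctional fun i => heig i.1, norm_sq_coordinateMap,
      Finset.mul_sum]
    gcongr with i
    simpa only [abs_of_pos i.2] using hre i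
  · have hinj : Function.Injective (p.prod q).toLinearMap := by
      refine (injective_iff_map_eq_zero _).mpr fun y hy => hsep y fun i => ?_
      obtain ⟨hp, hq⟩ : p y = 0 ∧ q y = 0 := Prod.mk_eq_zero.mp hy
      rcases (abs_pos.mp (hγ.trans_le (hre i))).lt_or_gt with hi | hi
      · exact congrArg (· ⟨i, hi⟩) hp
      · exact congrArg (· ⟨i, hi⟩) hq
    obtain ⟨c, -, hc⟩ := (LinearMap.injective_iff_antilipschitz _).mp hinj
    exact ⟨c, hc⟩

end HyperbolicSplitting

section SaddlePair

open Set
open scoped InnerProductSpace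

variable {G H : Type*} [NormedAddCommGroup G] [InnerProductSpace ℝ G] [NormedAddCommGroup H]
  [InnerProductSpace ℝ H]

/-- A stable component `s` and an unstable component `u` of a trajectory on `[0, T]` near a
hyperbolic equilibrium with rate `γ`, whose nonlinear part is at most `L (‖s‖ + ‖u‖)²`. The
differential equations enter only through the inequalities they imply for the derivatives of
`‖s‖² / 2` and `‖u‖² / 2`. -/
structure IsSaddlePair (γ L T : ℝ) (s : ℝ → G) (u : ℝ → H) : Prop where
  continuousOn_stable : ContinuousOn s (Icc 0 T)
  continuousOn_unstable : ContinuousOn u (Icc 0 T)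
  differentiableAt_stable : ∀ t ∈ Ioo 0 T, DifferentiableAt ℝ s t
  differentiableAt_unstable : ∀ t ∈ Ioo 0 T, DifferentiableAt ℝ u t
  inner_deriv_stable_le : ∀ t ∈ Ioo 0 T,
    ⟪s t, deriv s t⟫_ℝ ≤ -γ * ‖s t‖ ^ 2 + L * ‖s t‖ * (‖s t‖ + ‖u t‖) ^ 2
  le_inner_deriv_unstable : ∀ t ∈ Ioo 0 T,
    γ * ‖u t‖ ^ 2 - L * ‖u t‖ * (‖s t‖ + ‖u t‖) ^ 2 ≤ ⟪u t, deriv u t⟫_ℝ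

theorem integral_exp_neg_mul_add_exp_le {c T : ℝ} (hc : 0 < c) :
    ∫ τ in (0 : ℝ)..T, (exp (-(c * τ)) + exp (-(c * (T - τ)))) ≤ 2 / c := by
  have hint : ∫ τ in (0 : ℝ)..T, exp (-(c * τ)) = (1 - exp (-(c * T))) / c := by
    simp only [← neg_mul]
    rw [intervalIntegral.integral_comp_mul_left _ (neg_ne_zero.mpr hc.ne'), integral_exp, mul_zero,
      exp_zero, smul_eq_mul]
    field_simp
    ring
  rw [intervalIntegral.integral_add (Continuous.intervalIntegrable (by fun_prop) _ _)
      (Continuous.intervalIntegrable (by fun_prop) _ _),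
    intervalIntegral.integral_comp_sub_left (fun τ => exp (-(c * τ))), sub_self, sub_zero, hint,
    ← add_div]
  have := exp_pos (-(c * T))
  gcongr
  linarith

theorem add_le_two_mul_of_sq_add_sq_le {a b M α β : ℝ} (hM : 0 ≤ M)
    (h : a ^ 2 + b ^ 2 ≤ 2 * M ^ 2 * (exp (2 * α) + exp (2 * β))) :
    a + b ≤ 2 * M * (exp α + exp β) := by
  refine abs_le_of_sq_le_sq' ?_ (by positivity) |>.2
  rw [two_mul α, two_mul β, exp_add, exp_add] at h
  have := mul_nonneg (sq_nonneg M) (mul_pos (exp_pos α) (exp_pos β)).le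
  linarith [sq_nonneg (a - b)]

theorem hasDerivAt_integral_of_continuousOn_Icc {f : ℝ → ℝ} {a b t : ℝ}
    (hf : ContinuousOn f (Icc a b)) (ht : t ∈ Ioo a b) :
    HasDerivAt (fun t => ∫ τ in a..t, f τ) (f t) t := by
  have hsub : uIcc a t ⊆ Icc a b := by
    rw [uIcc_of_le ht.1.le]
    exact Icc_subset_Icc_right ht.2.le
  exact intervalIntegral.integral_hasDerivAt_right (hf.mono hsub).intervalIntegrable
    ((hf.mono Ioo_subset_Icc_self).stronglyMeasurableAtFilter isOpen_Ioo t ht)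
    (hf.continuousAt (Icc_mem_nhds ht.1 ht.2))

theorem continuousOn_integral_of_continuousOn_Icc {f : ℝ → ℝ} {a b : ℝ}
    (hf : ContinuousOn f (Icc a b)) : ContinuousOn (fun t => ∫ τ in a..t, f τ) (Icc a b) := by
  rcases le_or_gt a b with hab | hab
  · rw [← uIcc_of_le hab] at hf ⊢
    exact intervalIntegral.continuousOn_primitive_interval (hf.integrableOn_compact isCompact_uIcc)
  · simp only [Icc_eq_empty_of_lt hab, continuousOn_empty]

namespace IsSaddlePair

variable {γ L M T t : ℝ} {s : ℝ → G} {u : ℝ → H}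

theorem continuousOn_norm_add_norm (h : IsSaddlePair γ L T s u) :
    ContinuousOn (fun τ => ‖s τ‖ + ‖u τ‖) (Icc 0 T) :=
  h.continuousOn_stable.norm.add h.continuousOn_unstable.norm

theorem reverse (h : IsSaddlePair γ L T s u) :
    IsSaddlePair γ L T (fun τ => u (T - τ)) (fun τ => s (T - τ)) := by
  have hIcc : MapsTo (T - ·) (Icc 0 T) (Icc 0 T) := fun τ hτ =>
    ⟨by linarith [hτ.2], by linarith [hτ.1]⟩
  have hIoo : ∀ τ ∈ Ioo 0 T, T - τ ∈ Ioo 0 T := fun τ hτ =>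
    ⟨by linarith [hτ.2], by linarith [hτ.1]⟩
  refine ⟨h.continuousOn_unstable.comp (by fun_prop) hIcc,
    h.continuousOn_stable.comp (by fun_prop) hIcc,
    fun τ hτ => differentiableAt_comp_const_sub.mpr (h.differentiableAt_unstable _ (hIoo τ hτ)),
    fun τ hτ => differentiableAt_comp_const_sub.mpr (h.differentiableAt_stable _ (hIoo τ hτ)),
    fun τ hτ => ?_, fun τ hτ => ?_⟩
  · rw [deriv_comp_const_sub, inner_neg_right, add_comm ‖u _‖]
    linarith [h.le_inner_deriv_unstable _ (hIoo τ hτ)]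
  · rw [deriv_comp_const_sub, inner_neg_right, add_comm ‖u _‖]
    linarith [h.inner_deriv_stable_le _ (hIoo τ hτ)]

theorem antitoneOn_exp_mul (h : IsSaddlePair γ L T s u) (hL : 0 ≤ L)
    (hsmall : ∀ τ ∈ Icc 0 T, L * (‖s τ‖ + ‖u τ‖) ≤ γ / 4) :
    AntitoneOn (fun t => exp (2 * γ * t - 4 * L * ∫ τ in (0 : ℝ)..t, (‖s τ‖ + ‖u τ‖)) *
      (2 * ‖s t‖ ^ 2 - ‖u t‖ ^ 2)) (Icc 0 T) := by
  have hderiv : ∀ t ∈ Ioo 0 T, HasDerivAt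
      (fun t => exp (2 * γ * t - 4 * L * ∫ τ in (0 : ℝ)..t, (‖s τ‖ + ‖u τ‖)) *
        (2 * ‖s t‖ ^ 2 - ‖u t‖ ^ 2)) _ t := fun t ht =>
    (((hasDerivAt_id t).const_mul (2 * γ)).sub
      ((hasDerivAt_integral_of_continuousOn_Icc h.continuousOn_norm_add_norm ht).const_mul
        (4 * L))).exp.mul
      (((h.differentiableAt_stable t ht).hasDerivAt.norm_sq.const_mul 2).sub
        (h.differentiableAt_unstable t ht).hasDerivAt.norm_sq)
  refine antitoneOn_of_deriv_nonpos (convex_Icc 0 T) ?_ ?_ ?_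
  · have hint := continuousOn_integral_of_continuousOn_Icc h.continuousOn_norm_add_norm
    have hs := h.continuousOn_stable
    have hu := h.continuousOn_unstable
    fun_prop
  · rw [interior_Icc]
    exact fun t ht => (hderiv t ht).differentiableAt.differentiableWithinAt
  · rw [interior_Icc]
    intro t ht
    rw [(hderiv t ht).deriv, mul_right_comm, mul_assoc, ← mul_add]
    refine mul_nonpos_of_nonneg_of_nonpos (exp_pos _).le ?_
    have hs := h.inner_deriv_stable_le t ht
    have hu := h.le_inner_deriv_unstable t ht
    have hb := mul_le_mul_of_nonneg_right (hsmall t (Ioo_subset_Icc_self ht)) (sq_nonneg ‖u t‖)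
    have hsq : 0 ≤ L * (‖s t‖ + ‖u t‖) * ((2 * ‖s t‖ - 3 / 2 * ‖u t‖) ^ 2 + ‖u t‖ ^ 2) := by
      positivity
    have hε : 0 ≤ L * (‖s t‖ + ‖u t‖) * ‖u t‖ ^ 2 := by positivity
    linarith

theorem two_mul_norm_sq_sub_norm_sq_le (h : IsSaddlePair γ L T s u) (hL : 0 ≤ L)
    (hsmall : ∀ τ ∈ Icc 0 T, L * (‖s τ‖ + ‖u τ‖) ≤ γ / 4) (ht : t ∈ Icc 0 T) :
    2 * ‖s t‖ ^ 2 - ‖u t‖ ^ 2 ≤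
      2 * ‖s 0‖ ^ 2 * exp (2 * (2 * L * (∫ τ in (0 : ℝ)..t, (‖s τ‖ + ‖u τ‖)) - γ * t)) := by
  have hanti := h.antitoneOn_exp_mul hL hsmall (left_mem_Icc.mpr (ht.1.trans ht.2)) ht ht.1
  simp only [intervalIntegral.integral_same, mul_zero, sub_zero, exp_zero, one_mul] at hanti
  have hexp : 2 * (2 * L * (∫ τ in (0 : ℝ)..t, (‖s τ‖ + ‖u τ‖)) - γ * t) =
      -(2 * γ * t - 4 * L * ∫ τ in (0 : ℝ)..t, (‖s τ‖ + ‖u τ‖)) := by ring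
  rw [hexp, exp_neg, ← div_eq_mul_inv, le_div_iff₀' (exp_pos _)]
  linarith [sq_nonneg ‖u 0‖]

theorem norm_add_norm_le_exp_integral (h : IsSaddlePair γ L T s u) (hL : 0 ≤ L)
    (hM : ∀ τ ∈ Icc 0 T, ‖s τ‖ + ‖u τ‖ ≤ M) (hLM : L * M ≤ γ / 4) (ht : t ∈ Icc 0 T) :
    ‖s t‖ + ‖u t‖ ≤ 2 * M *
      (exp (2 * L * (∫ τ in (0 : ℝ)..t, (‖s τ‖ + ‖u τ‖)) - γ * t) +
        exp (2 * L * (∫ τ in t..T, (‖s τ‖ + ‖u τ‖)) - γ * (T - t))) := by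
  have hT : 0 ≤ T := ht.1.trans ht.2
  have hsmall : ∀ τ ∈ Icc 0 T, L * (‖s τ‖ + ‖u τ‖) ≤ γ / 4 := fun τ hτ =>
    (mul_le_mul_of_nonneg_left (hM τ hτ) hL).trans hLM
  have hrev : ∀ τ ∈ Icc 0 T, T - τ ∈ Icc 0 T := fun τ hτ =>
    ⟨by linarith [hτ.2], by linarith [hτ.1]⟩
  have hs := h.two_mul_norm_sq_sub_norm_sq_le hL hsmall ht
  have hu := h.reverse.two_mul_norm_sq_sub_norm_sq_le hL
    (fun τ hτ => by simpa only [add_comm] using hsmall _ (hrev τ hτ)) (hrev t ht)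
  simp only [add_comm ‖u _‖, sub_sub_cancel, sub_zero,
    intervalIntegral.integral_comp_sub_left fun τ => ‖s τ‖ + ‖u τ‖] at hu
  have hs0 : ‖s 0‖ ≤ M := (le_add_of_nonneg_right (norm_nonneg _)).trans (hM 0 ⟨le_rfl, hT⟩)
  have huT : ‖u T‖ ≤ M := (le_add_of_nonneg_left (norm_nonneg _)).trans (hM T ⟨hT, le_rfl⟩)
  have hs0M : 2 * ‖s 0‖ ^ 2 ≤ 2 * M ^ 2 := by gcongr
  have huTM : 2 * ‖u T‖ ^ 2 ≤ 2 * M ^ 2 := by gcongr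
  refine add_le_two_mul_of_sq_add_sq_le ((norm_nonneg _).trans hs0) ?_
  linarith only [hs.trans (mul_le_mul_of_nonneg_right hs0M (exp_pos _).le),
    hu.trans (mul_le_mul_of_nonneg_right huTM (exp_pos _).le)]

theorem norm_add_norm_le_exp_half (h : IsSaddlePair γ L T s u) (hL : 0 ≤ L)
    (hM : ∀ τ ∈ Icc 0 T, ‖s τ‖ + ‖u τ‖ ≤ M) (hLM : L * M ≤ γ / 4) (ht : t ∈ Icc 0 T) :
    ‖s t‖ + ‖u t‖ ≤ 2 * M * (exp (-(γ / 2 * t)) + exp (-(γ / 2 * (T - t)))) := by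
  have hM0 : 0 ≤ M := (by positivity : 0 ≤ ‖s t‖ + ‖u t‖).trans (hM t ht)
  have hint : ∀ {a b}, 0 ≤ a → a ≤ b → b ≤ T →
      2 * L * (∫ τ in a..b, (‖s τ‖ + ‖u τ‖)) ≤ γ / 2 * (b - a) := by
    intro a b ha hab hb
    have hbound : ∫ τ in a..b, (‖s τ‖ + ‖u τ‖) ≤ M * (b - a) := by
      rw [← abs_of_nonneg (sub_nonneg.mpr hab)]
      refine (le_norm_self _).trans
        (intervalIntegral.norm_integral_le_of_norm_le_const fun τ hτ => ?_)
      rw [uIoc_of_le hab] at hτ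
      rw [norm_of_nonneg (by positivity)]
      exact hM τ ⟨ha.trans hτ.1.le, hτ.2.trans hb⟩
    calc _ ≤ 2 * L * (M * (b - a)) := by gcongr
      _ = 2 * (L * M) * (b - a) := by ring
      _ ≤ 2 * (γ / 4) * (b - a) := by have := sub_nonneg.mpr hab; gcongr
      _ = γ / 2 * (b - a) := by ring
  refine (h.norm_add_norm_le_exp_integral hL hM hLM ht).trans ?_
  gcongr
  · linarith [hint le_rfl ht.1 ht.2]
  · linarith [hint ht.1 ht.2 le_rfl]

theorem two_mul_integral_norm_add_norm_le (h : IsSaddlePair γ L T s u) (hγ : 0 < γ) (hL : 0 ≤ L)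
    (hT : 0 ≤ T) (hM : ∀ τ ∈ Icc 0 T, ‖s τ‖ + ‖u τ‖ ≤ M) (hLM : L * M ≤ γ / 4) :
    2 * L * ∫ τ in (0 : ℝ)..T, (‖s τ‖ + ‖u τ‖) ≤ 4 := by
  have hM0 : 0 ≤ M := (by positivity : 0 ≤ ‖s 0‖ + ‖u 0‖).trans (hM 0 ⟨le_rfl, hT⟩)
  have hint : ∫ τ in (0 : ℝ)..T, (‖s τ‖ + ‖u τ‖) ≤ 2 * M * (2 / (γ / 2)) := by
    calc ∫ τ in (0 : ℝ)..T, (‖s τ‖ + ‖u τ‖)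
        ≤ ∫ τ in (0 : ℝ)..T, 2 * M * (exp (-(γ / 2 * τ)) + exp (-(γ / 2 * (T - τ)))) :=
          intervalIntegral.integral_mono_on hT
            (h.continuousOn_norm_add_norm.intervalIntegrable_of_Icc hT)
            (Continuous.intervalIntegrable (by fun_prop) _ _)
            fun τ hτ => h.norm_add_norm_le_exp_half hL hM hLM hτ
      _ ≤ 2 * M * (2 / (γ / 2)) := by
          rw [intervalIntegral.integral_const_mul]
          gcongr
          exact integral_exp_neg_mul_add_exp_le (half_pos hγ)
  calc 2 * L * ∫ τ in (0 : ℝ)..T, (‖s τ‖ + ‖u τ‖) ≤ 2 * L * (2 * M * (2 / (γ / 2))) := by gcongr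
    _ = L * M * (16 / γ) := by ring
    _ ≤ γ / 4 * (16 / γ) := by gcongr
    _ = 4 := by field_simp; norm_num

theorem norm_add_norm_le (h : IsSaddlePair γ L T s u) (hγ : 0 < γ) (hL : 0 ≤ L)
    (hM : ∀ τ ∈ Icc 0 T, ‖s τ‖ + ‖u τ‖ ≤ M) (hLM : L * M ≤ γ / 4) (ht : t ∈ Icc 0 T) :
    ‖s t‖ + ‖u t‖ ≤ 2 * exp 4 * M * (exp (-(γ * t)) + exp (-(γ * (T - t)))) := by
  have hT : 0 ≤ T := ht.1.trans ht.2
  have hM0 : 0 ≤ M := (by positivity : 0 ≤ ‖s t‖ + ‖u t‖).trans (hM t ht)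
  have htotal := h.two_mul_integral_norm_add_norm_le hγ hL hT hM hLM
  have hint : ∀ {a b}, 0 ≤ a → a ≤ b → b ≤ T → 2 * L * (∫ τ in a..b, (‖s τ‖ + ‖u τ‖)) ≤ 4 :=
    fun ha hab hb => (mul_le_mul_of_nonneg_left
      (intervalIntegral.integral_mono_interval ha hab hb
        (Filter.Eventually.of_forall fun τ => by positivity)
        (h.continuousOn_norm_add_norm.intervalIntegrable_of_Icc hT)) (by positivity)).trans htotal
  calc ‖s t‖ + ‖u t‖ ≤ _ := h.norm_add_norm_le_exp_integral hL hM hLM ht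
    _ ≤ 2 * M * (exp (4 - γ * t) + exp (4 - γ * (T - t))) := by
        gcongr
        · exact hint le_rfl ht.1 ht.2
        · exact hint ht.1 ht.2 le_rfl
    _ = _ := by rw [sub_eq_add_neg, sub_eq_add_neg, exp_add, exp_add]; ring

end IsSaddlePair

end SaddlePair

section HyperbolicEquilibrium

open Set Metric Asymptotics
open scoped InnerProductSpace Topology

variable {E : Type*} [NormedAddCommGroup E] [NormedSpace ℝ E]

theorem isBigO_sub_fderiv_of_contDiffAt_two {G : Type*} [NormedAddCommGroup G] [NormedSpace ℝ G]
    {f : E → G} {x₀ : E} (hf : ContDiffAt ℝ 2 f x₀) :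
    (fun x => f x - f x₀ - fderiv ℝ f x₀ (x - x₀)) =O[𝓝 x₀] fun x => ‖x - x₀‖ ^ 2 := by
  obtain ⟨K, s, hs, hK⟩ := (hf.fderiv_right (m := 1) (by norm_num)).exists_lipschitzOnWith
  have hdiff : ∀ᶠ x in 𝓝 x₀, DifferentiableAt ℝ f x :=
    (hf.eventually (by simp)).mono fun x hx => hx.differentiableAt (by norm_num)
  obtain ⟨r, hr, hball⟩ := Metric.mem_nhds_iff.mp (Filter.inter_mem hs hdiff)
  refine .of_bound K (Filter.eventually_of_mem (ball_mem_nhds x₀ hr) fun x hx => ?_)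
  have hsub : closedBall x₀ ‖x - x₀‖ ⊆ ball x₀ r :=
    closedBall_subset_ball (mem_ball_iff_norm.mp hx)
  have hmvt := (convex_closedBall x₀ ‖x - x₀‖).norm_image_sub_le_of_norm_fderiv_le' (𝕜 := ℝ)
    (fun z hz => (hball (hsub hz)).2)
    (fun z hz => (hK.norm_sub_le (hball (hsub hz)).1 (mem_of_mem_nhds hs)).trans
      (mul_le_mul_of_nonneg_left (mem_closedBall_iff_norm.mp hz) K.2))
    (mem_closedBall_self (norm_nonneg _)) (mem_closedBall_iff_norm.mpr le_rfl)
  rwa [mul_assoc, ← sq, ← norm_of_nonneg (sq_nonneg ‖x - x₀‖)] at hmvt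

variable {G H : Type*} [NormedAddCommGroup G] [InnerProductSpace ℝ G] [NormedAddCommGroup H]
  [InnerProductSpace ℝ H] {A : E →L[ℝ] E} {γ : ℝ} {p : E →L[ℝ] G} {q : E →L[ℝ] H} {F : E → E}
  {x₀ : E}

theorem abs_inner_map_sub_inner_map_le (p : E →L[ℝ] G) {P N : ℝ} {v w : E} (hp : ‖p‖ ≤ P)
    (hvw : ‖v - w‖ ≤ N) (y : E) : |⟪p y, p v⟫_ℝ - ⟪p y, p w⟫_ℝ| ≤ ‖p y‖ * (P * N) := by
  rw [← inner_sub_right, ← map_sub]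
  exact (abs_real_inner_le_norm _ _).trans
    (mul_le_mul_of_nonneg_left (p.le_of_opNorm_le_of_le hp hvw) (norm_nonneg _))

theorem IsHyperbolicSplitting.isSaddlePair (h : IsHyperbolicSplitting A γ p q) {c K T : ℝ}
    {x : ℝ → E} (hc : ∀ y, ‖y‖ ≤ c * (‖p y‖ + ‖q y‖)) (hK : 0 ≤ K)
    (hF : ∀ t ∈ Ioo 0 T, ‖F (x t) - A (x t - x₀)‖ ≤ K * ‖x t - x₀‖ ^ 2)
    (hcont : ContinuousOn x (Icc 0 T)) (hx : ∀ t ∈ Ioo 0 T, HasDerivAt x (F (x t)) t) :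
    IsSaddlePair γ ((‖p‖ + ‖q‖) * (K * c ^ 2)) T (fun t => p (x t - x₀))
      (fun t => q (x t - x₀)) := by
  have hN : ∀ t ∈ Ioo 0 T, ‖F (x t) - A (x t - x₀)‖ ≤
      K * c ^ 2 * (‖p (x t - x₀)‖ + ‖q (x t - x₀)‖) ^ 2 := fun t ht =>
    calc ‖F (x t) - A (x t - x₀)‖ ≤ K * ‖x t - x₀‖ ^ 2 := hF t ht
      _ ≤ K * (c * (‖p (x t - x₀)‖ + ‖q (x t - x₀)‖)) ^ 2 := by gcongr; exact hc _
      _ = K * c ^ 2 * (‖p (x t - x₀)‖ + ‖q (x t - x₀)‖) ^ 2 := by ring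
  have hp : ∀ t ∈ Ioo 0 T, HasDerivAt (fun t => p (x t - x₀)) (p (F (x t))) t := fun t ht =>
    p.hasFDerivAt.comp_hasDerivAt t ((hx t ht).sub_const x₀)
  have hq : ∀ t ∈ Ioo 0 T, HasDerivAt (fun t => q (x t - x₀)) (q (F (x t))) t := fun t ht =>
    q.hasFDerivAt.comp_hasDerivAt t ((hx t ht).sub_const x₀)
  refine ⟨by fun_prop, by fun_prop, fun t ht => (hp t ht).differentiableAt,
    fun t ht => (hq t ht).differentiableAt, fun t ht => ?_, fun t ht => ?_⟩
  · rw [(hp t ht).deriv]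
    have hpert := (abs_le.mp (abs_inner_map_sub_inner_map_le p
      (le_add_of_nonneg_right (norm_nonneg q)) (hN t ht) (x t - x₀))).2
    linarith [h.inner_stable_le (x t - x₀)]
  · rw [(hq t ht).deriv]
    have hpert := (abs_le.mp (abs_inner_map_sub_inner_map_le q
      (le_add_of_nonneg_left (norm_nonneg p)) (hN t ht) (x t - x₀))).1
    linarith [h.le_inner_unstable (x t - x₀)]

theorem IsHyperbolicSplitting.exists_norm_sub_le (h : IsHyperbolicSplitting A γ p q) (hγ : 0 < γ)
    (hF : (fun x => F x - A (x - x₀)) =O[𝓝 x₀] fun x => ‖x - x₀‖ ^ 2) :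
    ∃ C > 0, ∃ R > 0, ∀ (T : ℝ) (x : ℝ → E), ContinuousOn x (Icc 0 T) →
      (∀ t ∈ Ioo 0 T, HasDerivAt x (F (x t)) t) → (∀ t ∈ Icc 0 T, x t ∈ ball x₀ R) →
      ∀ t ∈ Icc 0 T, ‖x t - x₀‖ ≤ C * (exp (-(γ * t)) + exp (-(γ * (T - t)))) := by
  obtain ⟨c, hc, hle⟩ := h.exists_norm_le
  obtain ⟨K, hK, hbound⟩ := hF.exists_pos
  obtain ⟨r, hr, hball⟩ := eventually_nhds_iff_ball.mp hbound.bound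
  set L := (‖p‖ + ‖q‖) * (K * c ^ 2)
  set M := γ / (4 * (L + 1))
  have hL : 0 ≤ L := by positivity
  have hM : 0 < M := by positivity
  have hLM : L * M ≤ γ / 4 := by
    rw [mul_div_assoc', div_le_div_iff₀ (by positivity) (by positivity)]
    linarith
  refine ⟨c * (2 * exp 4 * M), mul_pos hc (mul_pos (by positivity) hM),
    min r (M / (‖p‖ + ‖q‖ + 1)), lt_min hr (div_pos hM (by positivity)),
    fun T x hcont hx hxball t ht => ?_⟩
  have hpair : IsSaddlePair γ L T (fun t => p (x t - x₀)) (fun t => q (x t - x₀)) :=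
    h.isSaddlePair hle hK.le (fun t ht => by
      simpa only [norm_pow, norm_norm] using
        hball _ (ball_subset_ball (min_le_left _ _) (hxball t (Ioo_subset_Icc_self ht)))) hcont hx
  have hsmall : ∀ τ ∈ Icc 0 T, ‖p (x τ - x₀)‖ + ‖q (x τ - x₀)‖ ≤ M := fun τ hτ => by
    have hτR : ‖x τ - x₀‖ ≤ M / (‖p‖ + ‖q‖ + 1) :=
      (mem_ball_iff_norm.mp (hxball τ hτ)).le.trans (min_le_right _ _)
    rw [le_div_iff₀' (by positivity)] at hτR
    linarith [p.le_opNorm (x τ - x₀), q.le_opNorm (x τ - x₀), norm_nonneg (x τ - x₀)]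
  rw [mul_assoc]
  exact (hle _).trans (mul_le_mul_of_nonneg_left
    (hpair.norm_add_norm_le hγ hL hsmall hLM ht) hc.le)

theorem exp_neg_mul_add_exp_neg_mul_sub_le {γ lam T t : ℝ} (hγ : 0 < γ)
    (ht : t ∈ Icc (lam * T / (2 * γ)) (T - lam * T / (2 * γ))) :
    exp (-(γ * t)) + exp (-(γ * (T - t))) ≤ 2 * exp (-lam * T / 2) := by
  have hmul : γ * (lam * T / (2 * γ)) = lam * T / 2 := by field_simp
  have hleft : γ * (lam * T / (2 * γ)) ≤ γ * t := by gcongr; exact ht.1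
  have hright : γ * (lam * T / (2 * γ)) ≤ γ * (T - t) := by gcongr; linarith [ht.2]
  rw [two_mul]
  gcongr <;> linarith

end HyperbolicEquilibrium

theorem roots_charpoly_toMatrix_map_ofReal {ι E : Type*} [Fintype ι] [DecidableEq ι]
    [AddCommGroup E] [Module ℝ E] [FiniteDimensional ℝ E] (b : Module.Basis ι ℝ E) (A : E →ₗ[ℝ] E) :
    ((LinearMap.toMatrix b b A).map (fun r : ℝ => (r : ℂ))).charpoly.roots =
      A.charpoly.aroots ℂ := by
  rw [Polynomial.aroots_def, ← LinearMap.charpoly_toMatrix A b, ← Matrix.charpoly_map]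
  rfl

theorem nodup_saddle_focus_eigenvalues {γ δ : ℝ} (hγ : γ ≠ 0) (hδ : δ ≠ 0) :
    ({(γ : ℂ) + δ * Complex.I, (γ : ℂ) - δ * Complex.I,
      -(γ : ℂ) + δ * Complex.I, -(γ : ℂ) - δ * Complex.I} : Multiset ℂ).Nodup := by
  simp [Complex.ext_iff, self_eq_neg, eq_comm, hγ, hδ]

theorem stmt8_general {E : Type*} [NormedAddCommGroup E] [NormedSpace ℝ E] [FiniteDimensional ℝ E]
    (F : E → E) (x₀ : E) (hF : ContDiffAt ℝ 2 F x₀) (hfix : F x₀ = 0) (γ : ℝ) (hγ : 0 < γ)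
    (hss : Module.End.IsSemisimple (fderiv ℝ F x₀ : E →ₗ[ℝ] E))
    (hspec : ∀ μ ∈ (fderiv ℝ F x₀ : E →ₗ[ℝ] E).charpoly.aroots ℂ, γ ≤ |μ.re|) :
    ∃ C > 0, ∃ R > 0, ∀ lam ≥ 0, ∀ T ≥ 0, ∀ x : ℝ → E, ContinuousOn x (Set.Icc 0 T) →
      (∀ t ∈ Set.Ioo 0 T, HasDerivAt x (F (x t)) t) → (∀ t ∈ Set.Icc 0 T, x t ∈ Metric.ball x₀ R) →
      ∀ t ∈ Set.Icc (lam * T / (2 * γ)) (T - lam * T / (2 * γ)),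
        ‖x t - x₀‖ ≤ C * exp (-lam * T / 2) := by
  obtain ⟨ι, κ, _, _, p, q, hpq⟩ := exists_isHyperbolicSplitting hγ hss hspec
  have hTaylor := isBigO_sub_fderiv_of_contDiffAt_two hF
  simp only [hfix, sub_zero] at hTaylor
  obtain ⟨C, hC, R, hR, hdecay⟩ := hpq.exists_norm_sub_le hγ hTaylor
  refine ⟨C * 2, by positivity, R, hR, fun lam hlam T hT x hcont hx hball t ht => ?_⟩
  have hend : 0 ≤ lam * T / (2 * γ) := by positivity
  rw [mul_assoc]
  exact (hdecay T x hcont hx hball t ⟨hend.trans ht.1, ht.2.trans (sub_le_self T hend)⟩).trans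
    (mul_le_mul_of_nonneg_left (exp_neg_mul_add_exp_neg_mul_sub_le hγ ht) hC.le)

theorem stmt8 (F : EuclideanSpace ℝ (Fin 4) → EuclideanSpace ℝ (Fin 4))
    (hF : ContDiff ℝ 4 F) (x₀ : EuclideanSpace ℝ (Fin 4)) (hfix : F x₀ = 0)
    (γ δ : ℝ) (hγ : 0 < γ) (hδ : δ ≠ 0)
    -- the complexification of DF(x₀) has exactly the four simple eigenvalues ±γ ± δi
    (hspec :
      (((LinearMap.toMatrix (EuclideanSpace.basisFun (Fin 4) ℝ).toBasis
            (EuclideanSpace.basisFun (Fin 4) ℝ).toBasis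
            (fderiv ℝ F x₀).toLinearMap).map (fun r : ℝ => (r : ℂ))).charpoly).roots =
        {(γ : ℂ) + δ * Complex.I, (γ : ℂ) - δ * Complex.I,
          -(γ : ℂ) + δ * Complex.I, -(γ : ℂ) - δ * Complex.I}) :
    ∀ lam : ℝ, 0 < lam → lam ≤ γ →
    ∃ C > (0:ℝ), ∃ T₀ > (0:ℝ), ∃ R > (0:ℝ), ∀ T : ℝ, T > T₀ →
      ∀ x : ℝ → EuclideanSpace ℝ (Fin 4),
        (∀ t ∈ Set.Icc (0:ℝ) T, HasDerivAt x (F (x t)) t) →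
        (∀ t ∈ Set.Icc (0:ℝ) T, x t ∈ Metric.ball x₀ R) →
        (∀ t ∈ Set.Icc (lam * T / (2 * γ)) (T - lam * T / (2 * γ)),
          ‖x t - x₀‖ ≤ C * Real.exp (-lam * T / 2)) ∧
        (lam = γ → ‖x (T / 2) - x₀‖ ≤ C * Real.exp (-γ * T / 2)) := by
  intro lam hlam _
  rw [roots_charpoly_toMatrix_map_ofReal] at hspec
  have hnodup : ((fderiv ℝ F x₀).toLinearMap.charpoly.aroots ℂ).Nodup :=
    hspec ▸ nodup_saddle_focus_eigenvalues hγ.ne' hδ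
  have hre : ∀ μ ∈ (fderiv ℝ F x₀).toLinearMap.charpoly.aroots ℂ, γ ≤ |μ.re| := by
    rw [hspec]
    simp [abs_of_pos hγ]
  obtain ⟨C, hC, R, hR, hdecay⟩ := stmt8_general F x₀ (hF.contDiffAt.of_le (by norm_num)) hfix
    γ hγ (isSemisimple_of_nodup_aroots_charpoly hnodup) hre
  refine ⟨C, hC, 1, one_pos, R, hR, fun T hT x hx hball => ?_⟩
  have hT0 : 0 ≤ T := zero_le_one.trans hT.le
  have hmain := hdecay lam hlam.le T hT0 x (HasDerivAt.continuousOn hx)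
    (fun t ht => hx t (Set.Ioo_subset_Icc_self ht)) hball
  refine ⟨hmain, ?_⟩
  rintro rfl
  have hmid : lam * T / (2 * lam) = T / 2 := by field_simp
  exact hmain (T / 2) (by rw [hmid, sub_half]; exact ⟨le_rfl, le_rfl⟩)
end
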